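/- arXiv:1506.05237 — 7 statements merged into one kernel-verified Lean document; each statement's English description precedes it below -/
import Mathlib

section
/- If a Banach space X is weak midpoint locally uniformly rotund and has the local diameter 2 property, then X has the diameter 2 property. -/
open Filter Topology

/-- The weak topology on a normed space `X`: the topology induced by all continuous
linear functionals on `X`. -/
noncomputable def weakTop (X : Type*) [NormedAddCommGroup X] [NormedSpace ℝ X] :
    TopologicalSpace X :=
  TopologicalSpace.induced (fun (x : X) (f : X →L[ℝ] ℝ) => f x) Pi.topologicalSpace

theorem aux_A {X : Type*} [NormedAddCommGroup X] [NormedSpace ℝ X]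
    (hwMLUR : ∀ x : X, ‖x‖ = 1 → ∀ y : ℕ → X,
      Tendsto (fun n => ‖x + y n‖) atTop (𝓝 1) →
      Tendsto (fun n => ‖x - y n‖) atTop (𝓝 1) →
      ∀ f : X →L[ℝ] ℝ, Tendsto (fun n => f (y n)) atTop (𝓝 0))
    (x : X) (hx : ‖x‖ = 1) (g : X →L[ℝ] ℝ) (c : ℝ) (hc : c < g x) :
    ∃ δ : ℝ, 0 < δ ∧ ∀ (k z : X) (a b : ℝ), ‖k‖ ≤ 1 → ‖z‖ ≤ 1 → 1 / 2 ≤ a → 0 ≤ b →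
      a + b = 1 → ‖x - (a • k + b • z)‖ < δ → c < g k := by
  by_contra hcon
  push Not at hcon
  have h1 : ∀ n : ℕ, (0 : ℝ) < 1 / ((n : ℝ) + 1) := fun n => by positivity
  choose k z a b hk hz ha hb hab hu hg using fun n : ℕ => hcon _ (h1 n)
  have hlim : Tendsto (fun n : ℕ => 1 / ((n : ℝ) + 1)) atTop (𝓝 0) :=
    tendsto_one_div_add_atTop_nhds_zero_nat
  have hxu : Tendsto (fun n => x - (a n • k n + b n • z n)) atTop (𝓝 0) :=
    squeeze_zero_norm (fun n => (hu n).le) hlim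
  set y : ℕ → X := fun n => (1 / 2 : ℝ) • (k n - (a n • k n + b n • z n)) with hy
  have hcomb : ∀ (p q : X) (s t : ℝ), ‖p‖ ≤ 1 → ‖q‖ ≤ 1 → 0 ≤ s → 0 ≤ t → s + t = 1 →
      ‖s • p + t • q‖ ≤ 1 := by
    intro p q s t hp hq hs ht hst
    calc ‖s • p + t • q‖ ≤ ‖s • p‖ + ‖t • q‖ := norm_add_le _ _
      _ = s * ‖p‖ + t * ‖q‖ := by
        rw [norm_smul, norm_smul, Real.norm_of_nonneg hs, Real.norm_of_nonneg ht]
      _ ≤ 1 := by nlinarith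
  have hp : ∀ n, ‖x + y n‖ ≤ 1 + 1 / ((n : ℝ) + 1) := by
    intro n
    have e : x + y n = (x - (a n • k n + b n • z n)) +
        ((1 / 2 + a n / 2) • k n + (b n / 2) • z n) := by
      simp only [hy]; module
    rw [e]
    have := hcomb (k n) (z n) (1 / 2 + a n / 2) (b n / 2) (hk n) (hz n)
      (by linarith [ha n]) (by linarith [hb n]) (by linarith [hab n])
    linarith [norm_add_le (x - (a n • k n + b n • z n))
        ((1 / 2 + a n / 2) • k n + (b n / 2) • z n), hu n]
  have hm : ∀ n, ‖x - y n‖ ≤ 1 + 1 / ((n : ℝ) + 1) := by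
    intro n
    have e : x - y n = (x - (a n • k n + b n • z n)) +
        ((3 / 2 * a n - 1 / 2) • k n + (3 / 2 * b n) • z n) := by
      simp only [hy]; module
    rw [e]
    have := hcomb (k n) (z n) (3 / 2 * a n - 1 / 2) (3 / 2 * b n) (hk n) (hz n)
      (by linarith [ha n]) (by linarith [hb n]) (by linarith [hab n])
    linarith [norm_add_le (x - (a n • k n + b n • z n))
        ((3 / 2 * a n - 1 / 2) • k n + (3 / 2 * b n) • z n), hu n]
  have hs : ∀ n, 2 ≤ ‖x + y n‖ + ‖x - y n‖ := by
    intro n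
    have e : (x + y n) + (x - y n) = (2 : ℝ) • x := by module
    have := norm_add_le (x + y n) (x - y n)
    rw [e, norm_smul, hx] at this
    simpa using this
  have hup : Tendsto (fun n : ℕ => 1 + 1 / ((n : ℝ) + 1)) atTop (𝓝 1) := by
    simpa using hlim.const_add 1
  have hlo : Tendsto (fun n : ℕ => 1 - 1 / ((n : ℝ) + 1)) atTop (𝓝 1) := by
    simpa using hlim.const_sub 1
  have t := hwMLUR x hx y
    (tendsto_of_tendsto_of_tendsto_of_le_of_le hlo hup
      (fun n => by simp only; linarith [hs n, hm n]) hp)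
    (tendsto_of_tendsto_of_tendsto_of_le_of_le hlo hup
      (fun n => by simp only; linarith [hs n, hp n]) hm) g
  have t2 : Tendsto (fun n => g (x - (a n • k n + b n • z n))) atTop (𝓝 0) := by
    have h := (g.continuous.tendsto 0).comp hxu
    rw [map_zero] at h
    exact h
  have t3 : Tendsto (fun n => 2 * g (y n) - g (x - (a n • k n + b n • z n))) atTop (𝓝 0) := by
    simpa using (t.const_mul 2).sub t2
  have : (0 : ℝ) ≤ c - g x := by
    refine le_of_tendsto t3 (Eventually.of_forall fun n => ?_)
    simp only [hy, map_smul, map_sub, smul_eq_mul]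
    linarith [hg n]
  linarith

/-- `V` contains a slice of the unit ball containing `x`. -/
def SliceNhd {X : Type*} [NormedAddCommGroup X] [NormedSpace ℝ X] (x : X) (V : Set X) : Prop :=
  ∃ (g : X →L[ℝ] ℝ) (c : ℝ), c < g x ∧ ∀ y : X, ‖y‖ ≤ 1 → c < g y → y ∈ V

theorem aux_inter {X : Type*} [NormedAddCommGroup X] [NormedSpace ℝ X]
    (hwMLUR : ∀ x : X, ‖x‖ = 1 → ∀ y : ℕ → X,
      Tendsto (fun n => ‖x + y n‖) atTop (𝓝 1) →
      Tendsto (fun n => ‖x - y n‖) atTop (𝓝 1) →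
      ∀ f : X →L[ℝ] ℝ, Tendsto (fun n => f (y n)) atTop (𝓝 0))
    (x : X) (hx : ‖x‖ = 1) (V₁ V₂ : Set X) (h₁ : SliceNhd x V₁) (h₂ : SliceNhd x V₂) :
    SliceNhd x (V₁ ∩ V₂) := by
  obtain ⟨g₁, c₁, hc₁, hV₁⟩ := h₁
  obtain ⟨g₂, c₂, hc₂, hV₂⟩ := h₂
  have hconv : ∀ (g : X →L[ℝ] ℝ) (c : ℝ), Convex ℝ {y : X | ‖y‖ ≤ 1 ∧ g y ≤ c} := by
    intro g c
    have e : {y : X | ‖y‖ ≤ 1 ∧ g y ≤ c} = Metric.closedBall 0 1 ∩ {y | g y ≤ c} := by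
      ext y; simp
    rw [e]
    exact (convex_closedBall _ _).inter (convex_halfSpace_le g.toLinearMap.isLinear c)
  set K₁ := {y : X | ‖y‖ ≤ 1 ∧ g₁ y ≤ c₁} with hK₁
  set K₂ := {y : X | ‖y‖ ≤ 1 ∧ g₂ y ≤ c₂} with hK₂
  by_cases n₁ : K₁.Nonempty
  swap
  · refine ⟨g₂, c₂, hc₂, fun y hy h => ⟨hV₁ y hy ?_, hV₂ y hy h⟩⟩
    by_contra hh
    exact n₁ ⟨y, hy, not_lt.1 hh⟩
  by_cases n₂ : K₂.Nonempty
  swap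
  · refine ⟨g₁, c₁, hc₁, fun y hy h => ⟨hV₁ y hy h, hV₂ y hy ?_⟩⟩
    by_contra hh
    exact n₂ ⟨y, hy, not_lt.1 hh⟩
  have hC : Convex ℝ (convexJoin ℝ K₁ K₂) := (hconv g₁ c₁).convexJoin (hconv g₂ c₂)
  have hxC : x ∉ closure (convexJoin ℝ K₁ K₂) := by
    intro hmem
    obtain ⟨δ₁, hδ₁, H₁⟩ := aux_A hwMLUR x hx g₁ c₁ hc₁
    obtain ⟨δ₂, hδ₂, H₂⟩ := aux_A hwMLUR x hx g₂ c₂ hc₂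
    obtain ⟨u, hu, hd⟩ := Metric.mem_closure_iff.1 hmem (min δ₁ δ₂) (lt_min hδ₁ hδ₂)
    rw [mem_convexJoin] at hu
    obtain ⟨p, hp, q, hq, hu⟩ := hu
    obtain ⟨a, b, ha, hb, hab, rfl⟩ := hu
    rw [dist_eq_norm] at hd
    rcases le_total (1 / 2) a with h | h
    · exact absurd (H₁ p q a b hp.1 hq.1 h hb hab (hd.trans_le (min_le_left _ _)))
        (not_lt.2 hp.2)
    · refine absurd (H₂ q p b a hq.1 hp.1 (by linarith) ha (by linarith) ?_)
        (not_lt.2 hq.2)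
      rw [add_comm (b • q)]
      exact hd.trans_le (min_le_right _ _)
  obtain ⟨f, u, hfx, hfu⟩ := geometric_hahn_banach_point_closed hC.closure isClosed_closure hxC
  refine ⟨-f, -u, by simpa using hfx, fun y hy h => ?_⟩
  have hyC : y ∉ convexJoin ℝ K₁ K₂ := by
    intro hh
    have := hfu y (subset_closure hh)
    simp at h
    linarith
  refine ⟨hV₁ y hy ?_, hV₂ y hy ?_⟩
  · by_contra hh
    exact hyC (subset_convexJoin_left n₂ ⟨hy, not_lt.1 hh⟩)
  · by_contra hh
    exact hyC (subset_convexJoin_right n₁ ⟨hy, not_lt.1 hh⟩)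

theorem aux_diam {X : Type*} [NormedAddCommGroup X] [NormedSpace ℝ X] [Nontrivial X]
    (hLD2P : ∀ f : X →L[ℝ] ℝ, ‖f‖ = 1 → ∀ ε : ℝ, 0 < ε →
      Metric.diam {x : X | ‖x‖ ≤ 1 ∧ f x > 1 - ε} = 2)
    (x : X) (hx : ‖x‖ = 1) (V : Set X) (h : SliceNhd x V) :
    2 ≤ Metric.diam (V ∩ {x : X | ‖x‖ ≤ 1}) := by
  obtain ⟨g, c, hc, hV⟩ := h
  have hbd : Bornology.IsBounded (V ∩ {x : X | ‖x‖ ≤ 1}) := by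
    refine Metric.isBounded_closedBall (x := (0 : X)) (r := 1) |>.subset fun y hy => ?_
    simpa using hy.2
  suffices hs : ∃ (f : X →L[ℝ] ℝ) (ε : ℝ), ‖f‖ = 1 ∧ 0 < ε ∧
      ∀ y : X, ‖y‖ ≤ 1 → f y > 1 - ε → y ∈ V by
    obtain ⟨f, ε, hf, hε, H⟩ := hs
    rw [← hLD2P f hf ε hε]
    exact Metric.diam_mono (fun y hy => ⟨H y hy.1 hy.2, hy.1⟩) hbd
  by_cases hg : g = 0
  · obtain ⟨f, hf, -⟩ := exists_dual_vector ℝ x (by intro h; simp [h] at hx)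
    refine ⟨f, 1, hf, one_pos, fun y hy _ => hV y hy ?_⟩
    simpa [hg] using hc
  · have hg0 : 0 < ‖g‖ := norm_pos_iff.2 hg
    refine ⟨‖g‖⁻¹ • g, 1 - ‖g‖⁻¹ * c, ?_, ?_, ?_⟩
    · rw [norm_smul, norm_inv, norm_norm, inv_mul_cancel₀ hg0.ne']
    · have h1 : g x ≤ ‖g‖ := by
        have := (le_abs_self _).trans (g.le_opNorm x)
        rwa [hx, mul_one] at this
      have : ‖g‖⁻¹ * c < ‖g‖⁻¹ * ‖g‖ :=
        mul_lt_mul_of_pos_left (hc.trans_le h1) (inv_pos.2 hg0)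
      rw [inv_mul_cancel₀ hg0.ne'] at this
      linarith
    · intro y hy h
      refine hV y hy ?_
      simp only [smul_apply, smul_eq_mul, sub_sub_cancel] at h
      exact lt_of_mul_lt_mul_left h (inv_pos.2 hg0).le

/-- The filter of sets containing a slice around `x`. -/
def sliceFilter {X : Type*} [NormedAddCommGroup X] [NormedSpace ℝ X] (x : X)
    (h : ∀ V₁ V₂ : Set X, SliceNhd x V₁ → SliceNhd x V₂ → SliceNhd x (V₁ ∩ V₂)) : Filter X where
  sets := {V | SliceNhd x V}
  univ_sets := ⟨0, -1, by simp, fun _ _ _ => trivial⟩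
  sets_of_superset := fun ⟨g, c, hc, hV⟩ hs => ⟨g, c, hc, fun y hy h => hs (hV y hy h)⟩
  inter_sets := fun h1 h2 => h _ _ h1 h2

theorem aux_tendsto {X : Type*} [NormedAddCommGroup X] [NormedSpace ℝ X] (x : X)
    (h : ∀ V₁ V₂ : Set X, SliceNhd x V₁ → SliceNhd x V₂ → SliceNhd x (V₁ ∩ V₂))
    (f : X →L[ℝ] ℝ) : Tendsto (fun y => f y) (sliceFilter x h) (𝓝 (f x)) := by
  rw [tendsto_order]
  constructor
  · intro a ha
    exact ⟨f, a, ha, fun y _ hy => hy⟩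
  · intro a ha
    exact ⟨-f, -a, by simpa using ha, fun y _ hy => by simpa using hy⟩

theorem weakMLUR_LD2P_implies_D2P {X : Type*} [NormedAddCommGroup X] [NormedSpace ℝ X]
    [CompleteSpace X] [Nontrivial X]
    (hwMLUR : ∀ x : X, ‖x‖ = 1 → ∀ y : ℕ → X,
      Tendsto (fun n => ‖x + y n‖) atTop (𝓝 1) →
      Tendsto (fun n => ‖x - y n‖) atTop (𝓝 1) →
      ∀ f : X →L[ℝ] ℝ, Tendsto (fun n => f (y n)) atTop (𝓝 0))
    (hLD2P : ∀ f : X →L[ℝ] ℝ, ‖f‖ = 1 → ∀ ε : ℝ, 0 < ε →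
      Metric.diam {x : X | ‖x‖ ≤ 1 ∧ f x > 1 - ε} = 2) :
    ∀ W : Set X, W.Nonempty →
      (∃ V : Set X, IsOpen[weakTop X] V ∧ W = V ∩ {x : X | ‖x‖ ≤ 1}) →
      Metric.diam W = 2 := by
  rintro W ⟨x₀, hx₀⟩ ⟨V, hV, rfl⟩
  obtain ⟨U, hU, rfl⟩ := isOpen_induced_iff.1 hV
  have hF : ∀ x : X, ‖x‖ = 1 → _ := fun x hx => aux_inter hwMLUR x hx
  -- it suffices to find a point of norm one
  suffices hs : ∃ x : X, ‖x‖ = 1 ∧ (fun f : X →L[ℝ] ℝ => f x) ∈ U by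
    obtain ⟨x, hx, hxU⟩ := hs
    refine le_antisymm ?_ ?_
    · refine Metric.diam_le_of_forall_dist_le (by norm_num) fun p hp q hq => ?_
      rw [dist_eq_norm]
      have h1 : ‖p‖ ≤ 1 := hp.2
      have h2 : ‖q‖ ≤ 1 := hq.2
      linarith [norm_sub_le p q]
    · refine aux_diam hLD2P x hx _ ?_
      have ht : Tendsto (fun (y : X) (f : X →L[ℝ] ℝ) => f y) (sliceFilter x (hF x hx))
          (𝓝 (fun f : X →L[ℝ] ℝ => f x)) :=
        tendsto_pi_nhds.2 fun f => aux_tendsto x (hF x hx) f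
      exact ht (hU.mem_nhds hxU)
  obtain ⟨I, u, hu, hIU⟩ := isOpen_pi_iff.1 hU _ hx₀.1
  by_cases hv : ∃ v : X, v ≠ 0 ∧ ∀ f ∈ I, f v = 0
  · obtain ⟨v, hv0, hv⟩ := hv
    have hvn : 0 < ‖v‖ := norm_pos_iff.2 hv0
    have hcont : Continuous fun t : ℝ => ‖x₀ + t • v‖ := by fun_prop
    have hT : 1 ≤ ‖x₀ + (2 / ‖v‖) • v‖ := by
      have h1 : ‖(2 / ‖v‖) • v‖ = 2 := by
        rw [norm_smul, Real.norm_of_nonneg (by positivity)]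
        field_simp
      have h2 := norm_sub_le (x₀ + (2 / ‖v‖) • v) x₀
      rw [add_sub_cancel_left, h1] at h2
      have h3 : ‖x₀‖ ≤ 1 := hx₀.2
      linarith
    obtain ⟨t, -, ht⟩ := intermediate_value_Icc (show (0 : ℝ) ≤ 2 / ‖v‖ by positivity)
      hcont.continuousOn (show (1 : ℝ) ∈ Set.Icc _ _ from ⟨by simpa using hx₀.2, hT⟩)
    refine ⟨x₀ + t • v, ht, hIU fun f hf => ?_⟩
    have := (hu f hf).2
    simpa [hv f hf] using this
  · exfalso
    push Not at hv
    obtain ⟨x, hx⟩ := exists_norm_eq X (zero_le_one (α := ℝ))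
    let L : X →ₗ[ℝ] (I → ℝ) := LinearMap.pi fun f => (f : X →L[ℝ] ℝ).toLinearMap
    have hL : LinearMap.ker L = ⊥ := by
      rw [LinearMap.ker_eq_bot']
      intro m hm
      by_contra h0
      obtain ⟨f, hf, hne⟩ := hv m h0
      exact hne (congrFun hm ⟨f, hf⟩)
    have : FiniteDimensional ℝ X :=
      FiniteDimensional.of_injective L (LinearMap.ker_eq_bot.1 hL)
    have hemb := LinearMap.isClosedEmbedding_of_injective hL
    have ht : Tendsto L (sliceFilter x (hF x hx)) (𝓝 (L x)) :=
      tendsto_pi_nhds.2 fun f => aux_tendsto x (hF x hx) f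
    have hle : Tendsto id (sliceFilter x (hF x hx)) (𝓝 x) :=
      hemb.isInducing.tendsto_nhds_iff.2 ht
    have hb := aux_diam hLD2P x hx _ (hle (Metric.ball_mem_nhds x (ε := 1 / 4) (by norm_num)))
    have h2 : Metric.diam ((id ⁻¹' Metric.ball x (1 / 4)) ∩ {x : X | ‖x‖ ≤ 1}) ≤ 2 * (1 / 4) :=
      (Metric.diam_mono Set.inter_subset_left Metric.isBounded_ball).trans
        (Metric.diam_ball (by norm_num))
    linarith
end

section
/- For any sequence D = (D_n)_{n=1}^∞ of nonempty open subsets of [0,1] forming a base for the topology of [0,1], the space X_D = (C[0,1], ‖·‖_D) is midpoint locally uniformly rotund: for every x with ‖x‖_D = 1 and every sequence (y_k) in C[0,1] with ‖x ± y_k‖_D → 1, one has ‖y_k‖_D → 0. -/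
open Set Filter Topology

/-- The `n`-th seminorm: `‖x‖ₙ = sup_{d ∈ Dₙ} |x d|`. -/
noncomputable def seminormD (D : ℕ → Set (Icc (0:ℝ) 1)) (n : ℕ)
    (x : C(Icc (0:ℝ) 1, ℝ)) : ℝ :=
  ⨆ d : D n, |x d|

/-- The norm `‖x‖_D = (Σₙ 2⁻ⁿ ‖x‖ₙ²)^{1/2}` (indexing the sequence from `0`,
with weight `2^{-(n+1)}`). -/
noncomputable def normD (D : ℕ → Set (Icc (0:ℝ) 1)) (x : C(Icc (0:ℝ) 1, ℝ)) : ℝ :=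
  Real.sqrt (∑' n : ℕ, (1 / 2 : ℝ) ^ (n + 1) * (seminormD D n x) ^ 2)

theorem sD_nonneg (D : ℕ → Set (Icc (0:ℝ) 1)) (n : ℕ) (x : C(Icc (0:ℝ) 1, ℝ)) :
    0 ≤ seminormD D n x := Real.iSup_nonneg fun _ => abs_nonneg _

theorem sD_le_of (D : ℕ → Set (Icc (0:ℝ) 1)) (n : ℕ) (x : C(Icc (0:ℝ) 1, ℝ)) (c : ℝ)
    (hc : 0 ≤ c) (h : ∀ d ∈ D n, |x d| ≤ c) : seminormD D n x ≤ c :=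
  Real.iSup_le (fun d => h d d.2) hc

theorem le_sD (D : ℕ → Set (Icc (0:ℝ) 1)) (n : ℕ) (x : C(Icc (0:ℝ) 1, ℝ))
    (d : Icc (0:ℝ) 1) (hd : d ∈ D n) : |x d| ≤ seminormD D n x := by
  have hb : BddAbove (Set.range fun d : D n => |x d|) := by
    refine ⟨‖x‖, ?_⟩
    rintro _ ⟨d, rfl⟩
    exact x.norm_coe_le_norm d
  exact le_ciSup hb (⟨d, hd⟩ : D n)

theorem sD_le_norm (D : ℕ → Set (Icc (0:ℝ) 1)) (n : ℕ) (x : C(Icc (0:ℝ) 1, ℝ)) :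
    seminormD D n x ≤ ‖x‖ :=
  sD_le_of D n x _ (norm_nonneg _) fun d _ => x.norm_coe_le_norm d

theorem hasSum_half : HasSum (fun n : ℕ => (1 / 2 : ℝ) ^ (n + 1)) 1 := by
  have h := hasSum_geometric_two.mul_left (1/2 : ℝ)
  norm_num at h
  refine (h.congr_fun ?_) <;> intro n <;> ring

theorem sD_summable (D : ℕ → Set (Icc (0:ℝ) 1)) (x : C(Icc (0:ℝ) 1, ℝ)) :
    Summable fun n : ℕ => (1 / 2 : ℝ) ^ (n + 1) * (seminormD D n x) ^ 2 := by
  refine Summable.of_nonneg_of_le (fun n => by positivity) (fun n => ?_)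
    (hasSum_half.summable.mul_right (‖x‖ ^ 2))
  have := sD_nonneg D n x
  have := sD_le_norm D n x
  gcongr

theorem normD_sq (D : ℕ → Set (Icc (0:ℝ) 1)) (x : C(Icc (0:ℝ) 1, ℝ)) :
    normD D x ^ 2 = ∑' n : ℕ, (1 / 2 : ℝ) ^ (n + 1) * (seminormD D n x) ^ 2 :=
  Real.sq_sqrt (tsum_nonneg fun n => by positivity)

theorem normD_le_norm (D : ℕ → Set (Icc (0:ℝ) 1)) (x : C(Icc (0:ℝ) 1, ℝ)) :
    normD D x ≤ ‖x‖ := by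
  refine Real.sqrt_le_iff.2 ⟨norm_nonneg _, ?_⟩
  have h := hasSum_half.mul_right (‖x‖ ^ 2)
  rw [one_mul] at h
  rw [← h.tsum_eq]
  refine (sD_summable D x).tsum_le_tsum (fun n => ?_) h.summable
  have := sD_nonneg D n x
  have := sD_le_norm D n x
  gcongr

theorem sD_two (D : ℕ → Set (Icc (0:ℝ) 1)) (n : ℕ) (x y : C(Icc (0:ℝ) 1, ℝ)) :
    2 * seminormD D n x ≤ seminormD D n (x + y) + seminormD D n (x - y) := by
  have h1 := sD_nonneg D n (x + y)
  have h2 := sD_nonneg D n (x - y)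
  have : seminormD D n x ≤ (seminormD D n (x + y) + seminormD D n (x - y)) / 2 := by
    refine sD_le_of D n x _ (by positivity) fun d hd => ?_
    have h3 := le_sD D n (x + y) d hd
    have h4 := le_sD D n (x - y) d hd
    simp only [ContinuousMap.add_apply, ContinuousMap.sub_apply] at h3 h4
    rw [abs_le] at *
    constructor <;> linarith
  linarith

theorem key_term (a p q : ℝ) (ha : 0 ≤ a) (h : 2 * a ≤ p + q) :
    (p - a) ^ 2 + (q - a) ^ 2 ≤ p ^ 2 + q ^ 2 - 2 * a ^ 2 := by
  nlinarith [mul_nonneg ha (sub_nonneg.2 h)]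

theorem key_sum (D : ℕ → Set (Icc (0:ℝ) 1)) (n : ℕ) (x y : C(Icc (0:ℝ) 1, ℝ)) :
    (1 / 2 : ℝ) ^ (n + 1) * ((seminormD D n (x + y) - seminormD D n x) ^ 2 +
      (seminormD D n (x - y) - seminormD D n x) ^ 2) ≤
    normD D (x + y) ^ 2 + normD D (x - y) ^ 2 - 2 * normD D x ^ 2 := by
  have hs := ((sD_summable D (x + y)).hasSum.add (sD_summable D (x - y)).hasSum).sub
    ((sD_summable D x).hasSum.mul_left 2)
  rw [← normD_sq, ← normD_sq, ← normD_sq] at hs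
  have hk : ∀ m, (1 / 2 : ℝ) ^ (m + 1) * ((seminormD D m (x + y) - seminormD D m x) ^ 2 +
      (seminormD D m (x - y) - seminormD D m x) ^ 2) ≤
      (1 / 2 : ℝ) ^ (m + 1) * (seminormD D m (x + y)) ^ 2 +
      (1 / 2 : ℝ) ^ (m + 1) * (seminormD D m (x - y)) ^ 2 -
      2 * ((1 / 2 : ℝ) ^ (m + 1) * (seminormD D m x) ^ 2) := by
    intro m
    have := mul_le_mul_of_nonneg_left (key_term _ _ _ (sD_nonneg D m x) (sD_two D m x y))
      (by positivity : (0:ℝ) ≤ (1 / 2 : ℝ) ^ (m + 1))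
    linarith
  refine (hk n).trans (le_hasSum hs n fun m _ => ?_)
  exact le_trans (by positivity) (hk m)

/-- For any base `D` of nonempty open sets of `[0,1]`, the space `X_D = (C[0,1], ‖·‖_D)`
is midpoint locally uniformly rotund. -/
theorem normD_MLUR (D : ℕ → Set (Icc (0:ℝ) 1))
    (hDopen : ∀ n, IsOpen (D n)) (hDne : ∀ n, (D n).Nonempty)
    (hbasis : TopologicalSpace.IsTopologicalBasis (Set.range D)) :
    ∀ x : C(Icc (0:ℝ) 1, ℝ), normD D x = 1 →
      ∀ y : ℕ → C(Icc (0:ℝ) 1, ℝ),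
        Tendsto (fun k => normD D (x + y k)) atTop (𝓝 1) →
        Tendsto (fun k => normD D (x - y k)) atTop (𝓝 1) →
        Tendsto (fun k => normD D (y k)) atTop (𝓝 0) := by
  intro x hx y hp hq
  have hlim : Tendsto (fun k => normD D (x + y k) ^ 2 + normD D (x - y k) ^ 2
      - 2 * normD D x ^ 2) atTop (𝓝 0) := by
    have := ((hp.pow 2).add (hq.pow 2)).sub_const (2 * normD D x ^ 2)
    rw [hx] at this ⊢
    norm_num at this ⊢
    exact this
  have hsem : ∀ n, ∀ ε > 0, ∀ᶠ k in atTop,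
      seminormD D n (x + y k) ≤ seminormD D n x + ε ∧
      seminormD D n (x - y k) ≤ seminormD D n x + ε := by
    intro n ε hε
    have hw : (0:ℝ) < (1 / 2 : ℝ) ^ (n + 1) := by positivity
    filter_upwards [hlim.eventually (gt_mem_nhds (mul_pos hw (pow_pos hε 2)))] with k hk
    have h := lt_of_mul_lt_mul_left ((key_sum D n x (y k)).trans_lt hk) hw.le
    constructor
    · have : (seminormD D n (x + y k) - seminormD D n x) ^ 2 ≤ ε ^ 2 := by
        linarith [sq_nonneg (seminormD D n (x - y k) - seminormD D n x)]
      linarith [abs_le_of_sq_le_sq' this hε.le]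
    · have : (seminormD D n (x - y k) - seminormD D n x) ^ 2 ≤ ε ^ 2 := by
        linarith [sq_nonneg (seminormD D n (x + y k) - seminormD D n x)]
      linarith [abs_le_of_sq_le_sq' this hε.le]
  have hunif : ∀ ε > 0, ∀ᶠ k in atTop, ‖y k‖ ≤ 3 * ε := by
    intro ε hε
    have hloc : ∀ t : Icc (0:ℝ) 1, ∃ n, t ∈ D n ∧ ∀ s ∈ D n, |x s - x t| < ε := by
      intro t
      have hU : {s | |x s - x t| < ε} ∈ 𝓝 t := by
        refine IsOpen.mem_nhds (isOpen_lt (by fun_prop) continuous_const) ?_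
        simpa using hε
      obtain ⟨_, ⟨n, rfl⟩, ht, hsub⟩ := hbasis.mem_nhds_iff.1 hU
      exact ⟨n, ht, fun s hs => hsub hs⟩
    choose N hN hNs using hloc
    obtain ⟨T, hT⟩ := isCompact_univ.elim_finite_subcover (fun t => D (N t))
      (fun t => hDopen _) (fun t _ => mem_iUnion.2 ⟨t, hN t⟩)
    filter_upwards [(Finset.eventually_all T).2 fun t _ => hsem (N t) ε hε] with k hk
    refine (ContinuousMap.norm_le _ (by positivity)).2 fun s => ?_
    obtain ⟨t, htT, hs⟩ := mem_iUnion₂.1 (hT (mem_univ s))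
    obtain ⟨h1, h2⟩ := hk t htT
    have h3 := le_sD D (N t) (x + y k) s hs
    have h4 := le_sD D (N t) (x - y k) s hs
    have h5 : seminormD D (N t) x ≤ |x t| + ε := by
      refine sD_le_of _ _ _ _ (by positivity) fun d hd => ?_
      have := hNs t d hd
      have := abs_sub_abs_le_abs_sub (x d) (x t)
      linarith
    have h6 : |x t| - |x s| < ε :=
      (abs_sub_abs_le_abs_sub (x t) (x s)).trans_lt (by rw [abs_sub_comm]; exact hNs t s hs)
    simp only [ContinuousMap.add_apply, ContinuousMap.sub_apply] at h3 h4
    rw [Real.norm_eq_abs, abs_le]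
    rw [abs_le] at h3 h4
    rcases abs_cases (x s) with h | h <;> constructor <;> linarith
  rw [Metric.tendsto_nhds]
  intro ε hε
  filter_upwards [hunif (ε / 6) (by positivity)] with k hk
  have h0 : 0 ≤ normD D (y k) := Real.sqrt_nonneg _
  rw [Real.dist_eq, sub_zero, abs_of_nonneg h0]
  linarith [normD_le_norm D (y k)]
end

section
/- There exists a Banach space X which is midpoint locally uniformly rotund, has the diameter 2 property, has the local diameter 2 property +, and such that for every δ > 0 there exists a finite convex combination of slices of the unit ball B_X with diameter less than δ. -/
open Filter Topology

namespace MlurEx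
abbrev K := ℕ → Bool
abbrev E := C(K, ℝ)

open Classical in
noncomputable def chi (U : Set K) : E :=
  if h : IsClopen U then ⟨U.indicator 1, continuous_one.indicator (by simp [h.frontier_eq])⟩ else 0

lemma chi_of_mem {U : Set K} (h : IsClopen U) {x : K} (hx : x ∈ U) : chi U x = 1 := by
  simp [chi, h, hx]
lemma chi_of_notMem {U : Set K} {x : K} (hx : x ∉ U) : chi U x = 0 := by
  unfold chi; split_ifs <;> simp [hx]
lemma chi_abs (U : Set K) (x : K) : |chi U x| ≤ 1 := by
  unfold chi; split_ifs
  · by_cases hx : x ∈ U <;> simp [hx]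
  · simp
lemma norm_chi (U : Set K) : ‖chi U‖ ≤ 1 :=
  (ContinuousMap.norm_le _ zero_le_one).2 fun x => chi_abs U x

def cyl (m b : ℕ) : Set K := {x | ∀ i < m, x i = b.testBit i}

lemma clopen_coord (i : ℕ) (c : Bool) : IsClopen {x : K | x i = c} :=
  (isClopen_discrete ({c} : Set Bool)).preimage (continuous_apply i)

lemma clopen_all (m : ℕ) (g : ℕ → ℕ) (c : ℕ → Bool) : IsClopen {x : K | ∀ i < m, x (g i) = c i} := by
  have : {x : K | ∀ i < m, x (g i) = c i} = ⋂ i ∈ Finset.range m, {x : K | x (g i) = c i} := by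
    ext x; simp
  rw [this]
  exact isClopen_biInter_finset fun i _ => clopen_coord _ _

lemma clopen_cyl (m b : ℕ) : IsClopen (cyl m b) := clopen_all m id _

lemma exists_code (m : ℕ) (x : K) : ∃ b < 2 ^ m, x ∈ cyl m b := by
  refine ⟨Nat.ofBits (fun i : Fin m => x i), Nat.ofBits_lt_two_pow _, fun i hi => ?_⟩
  rw [Nat.testBit_ofBits_lt _ _ hi]

lemma osc (f : E) {η : ℝ} (hη : 0 < η) :
    ∃ M : ℕ, ∀ N, M ≤ N → ∀ x y : K, (∀ i < N, x i = y i) → |f x - f y| ≤ η := by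
  have h1 : ∀ x : K, ∃ m : ℕ, ∀ y : K, (∀ i < m, y i = x i) → |f y - f x| < η / 2 := by
    intro x
    have : f ⁻¹' Metric.ball (f x) (η/2) ∈ 𝓝 x :=
      f.continuous.continuousAt (Metric.ball_mem_nhds _ (by positivity))
    obtain ⟨U, ⟨z, n, rfl⟩, hx, hU⟩ :=
      (PiNat.isTopologicalBasis_cylinders (fun _ : ℕ => Bool)).mem_nhds_iff.1 this
    refine ⟨n, fun y hy => ?_⟩
    have := hU (show y ∈ PiNat.cylinder z n from fun i hi => (hy i hi).trans (hx i hi))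
    simpa [Real.dist_eq] using this
  choose m hm using h1
  obtain ⟨t, -, ht⟩ := isCompact_univ.elim_nhds_subcover (fun x : K => {y : K | ∀ i < m x, y i = x i})
    (fun x _ => (clopen_all (m x) id x).isOpen.mem_nhds (fun i _ => rfl))
  refine ⟨t.sup m, fun N hN x y hxy => ?_⟩
  obtain ⟨z, hz, hxz⟩ := Set.mem_iUnion₂.1 (ht (Set.mem_univ x))
  have hmz : m z ≤ N := (Finset.le_sup hz).trans hN
  have a1 := hm z x hxz
  have a2 := hm z y (fun i hi => (hxy i (hi.trans_le hmz)).symm.trans (hxz i hi))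
  rw [abs_lt] at a1 a2
  rw [abs_le]; constructor <;> linarith

/-- disjoint dense clopens -/
def bump (M k : ℕ) : Set K := {x | x (M + k) = true} ∩ {x | ∀ j < k, x (M + j) = false}

lemma clopen_bump (M k : ℕ) : IsClopen (bump M k) :=
  (clopen_coord _ _).inter (clopen_all k (fun j => M + j) _)

lemma bump_disj {M k l : ℕ} {x : K} (h : x ∈ bump M k) (h' : x ∈ bump M l) : k = l := by
  rcases lt_trichotomy k l with hl | hl | hl
  · have := h'.2 k hl; have := h.1; simp_all
  · exact hl
  · have := h.2 l hl; have := h'.1; simp_all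

lemma bump_hit (M k : ℕ) (t : K) : ∃ x ∈ bump M k, ∀ i < M, x i = t i := by
  refine ⟨fun i => if i < M then t i else decide (i = M + k), ⟨by simp, fun j hj => ?_⟩, ?_⟩
  · simp; omega
  · intro i hi; simp [hi]

lemma norm_bump {f : E} {η : ℝ} {M : ℕ} (hη : 0 ≤ η)
    (h : ∀ x y : K, (∀ i < M, x i = y i) → |f x - f y| ≤ η) (k : ℕ) :
    ‖f‖ ≤ ‖chi (bump M k) * f‖ + η := by
  refine (ContinuousMap.norm_le _ (by positivity)).2 fun t => ?_
  obtain ⟨x, hx, hxt⟩ := bump_hit M k t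
  have h1 := h x t hxt
  have h2 := ContinuousMap.norm_coe_le_norm (chi (bump M k) * f) x
  simp only [ContinuousMap.mul_apply, chi_of_mem (clopen_bump M k) hx, one_mul, Real.norm_eq_abs] at h2 ⊢
  have := abs_sub_abs_le_abs_sub (f t) (f x)
  rw [abs_sub_comm] at h1
  linarith

lemma sum_bump (L : E →ₗ[ℝ] ℝ) {C : ℝ} (hL : ∀ u : E, ‖u‖ ≤ 1 → |L u| ≤ C) (M n : ℕ) :
    ∑ k ∈ Finset.range n, |L (chi (bump M k))| ≤ C := by
  let u : E := ∑ k ∈ Finset.range n, (SignType.sign (L (chi (bump M k))) : ℝ) • chi (bump M k)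
  have hu : ‖u‖ ≤ 1 := by
    refine (ContinuousMap.norm_le _ zero_le_one).2 fun x => ?_
    simp only [u, ContinuousMap.coe_sum, Finset.sum_apply, ContinuousMap.smul_apply, smul_eq_mul]
    have hs : ∀ r : ℝ, |(SignType.sign r : ℝ)| ≤ 1 := by
      intro r; rcases lt_trichotomy r 0 with h | h | h <;> simp [h]
    by_cases hx : ∃ k, x ∈ bump M k
    · obtain ⟨k, hk⟩ := hx
      by_cases hkn : k ∈ Finset.range n
      · rw [Finset.sum_eq_single_of_mem k hkn]
        · rw [chi_of_mem (clopen_bump M k) hk, mul_one]; exact hs _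
        · intro l _ hl
          rw [chi_of_notMem (fun h => hl (bump_disj h hk)), mul_zero]
      · rw [Finset.sum_eq_zero]
        · simp
        · intro l hln
          rw [chi_of_notMem (fun h => hkn (bump_disj h hk ▸ hln)), mul_zero]
    · rw [Finset.sum_eq_zero]
      · simp
      · intro l hln
        rw [chi_of_notMem (fun h => hx ⟨l, h⟩), mul_zero]
  calc _ = L u := by
        simp only [u, map_sum, map_smul, smul_eq_mul]
        refine Finset.sum_congr rfl fun k _ => ?_
        exact (sign_mul_self _).symm
    _ ≤ |L u| := le_abs_self _
    _ ≤ C := hL u hu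

abbrev P := ℕ × ℕ × ℕ
noncomputable abbrev H := lp (fun _ : P => E) 2

noncomputable def wt (m b : ℕ) : ℝ := (1/2) ^ m * (1/2) ^ b
lemma wt_pos (m b : ℕ) : 0 < wt m b := by unfold wt; positivity
lemma wt_le (m b : ℕ) : wt m b ≤ 1 := by
  unfold wt
  exact mul_le_one₀ (pow_le_one₀ (by norm_num) (by norm_num)) (by positivity) (pow_le_one₀ (by norm_num) (by norm_num))

noncomputable def X : Submodule ℝ H where
  carrier := {F | ∀ i m b, F (i, m, b) = wt m b • (chi (cyl m b) * F (i, 0, 0))}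
  add_mem' := by
    intro F G hF hG i m b
    simp only [lp.coeFn_add, Pi.add_apply]
    rw [hF i m b, hG i m b, mul_add, smul_add]
  zero_mem' := by intro i m b; simp
  smul_mem' := by
    intro c F hF i m b
    simp only [lp.coeFn_smul, Pi.smul_apply]
    rw [hF i m b, mul_smul_comm, smul_comm]

lemma continuous_coord (p : P) : Continuous (fun F : H => F p) :=
  (lp.evalCLM ℝ (fun _ : P => E) 2 p).continuous

lemma closed_X : IsClosed (X : Set H) := by
  have : (X : Set H) = ⋂ i, ⋂ m, ⋂ b, {F : H | F (i, m, b) = wt m b • (chi (cyl m b) * F (i, 0, 0))} := by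
    ext F; simp only [Set.mem_iInter]; rfl
  rw [this]
  refine isClosed_iInter fun i => isClosed_iInter fun m => isClosed_iInter fun b => ?_
  have h : Continuous fun F : H => chi (cyl m b) * F (i, 0, 0) :=
    continuous_const.mul (continuous_coord _)
  have h' : Continuous fun F : H => wt m b • (chi (cyl m b) * F (i, 0, 0)) :=
    (h.const_smul (wt m b) :)
  exact isClosed_eq (continuous_coord _) h'

instance : CompleteSpace X := closed_X.completeSpace_coe

lemma hasSum_sq (F : H) : HasSum (fun p => ‖F p‖ ^ 2) (‖F‖ ^ 2) := by
  have := lp.hasSum_norm (p := 2) (by norm_num) F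
  simpa using this

lemma norm_mono {F G : X} (h : ∀ p, ‖(F : H) p‖ ≤ ‖(G : H) p‖) : ‖F‖ ≤ ‖G‖ := by
  have := hasSum_le (fun p => pow_le_pow_left₀ (norm_nonneg _) (h p) 2) (hasSum_sq F) (hasSum_sq G)
  exact (sq_le_sq₀ (norm_nonneg _) (norm_nonneg _)).1 this

lemma X_ext {F G : X} (h : ∀ p, (F : H) p = (G : H) p) : F = G :=
  Subtype.ext (lp.ext (funext h))

/-- blockwise multiplication -/
lemma exists_mul (u : ℕ → E) (C : ℝ) (hu : ∀ i, ‖u i‖ ≤ C) (F : X) :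
    ∃ G : X, (∀ p, (G : H) p = u p.1 * (F : H) p) := by
  have hb : ∀ (F : H) p, ‖u p.1 * F p‖ ≤ ‖(C • F) p‖ := fun F p => by
    have hC : 0 ≤ C := (norm_nonneg _).trans (hu 0)
    rw [lp.coeFn_smul, Pi.smul_apply, norm_smul, Real.norm_of_nonneg hC]
    exact (norm_mul_le _ _).trans (by gcongr; exact hu _)
  have hmem : ∀ F : H, Memℓp (fun p => u p.1 * F p) 2 := fun F =>
    (lp.memℓp (C • F)).mono' (hb F)
  refine ⟨⟨⟨fun p => u p.1 * (F : H) p, hmem F⟩, ?_⟩, fun p => rfl⟩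
  intro i m b
  change u i * (F : H) (i, m, b) = wt m b • (chi (cyl m b) * (u i * (F : H) (i, 0, 0)))
  rw [F.2 i m b, mul_smul_comm, mul_left_comm]

lemma exists_R (F : X) : ∃ R : E →ₗ[ℝ] X, ∀ u p, (R u : H) p = u * (F : H) p := by
  have h := fun u : E => exists_mul (fun _ => u) ‖u‖ (fun _ => le_rfl) F
  choose R hR using h
  refine ⟨⟨⟨R, ?_⟩, ?_⟩, hR⟩
  · intro u v
    refine X_ext fun p => ?_
    change _ = (R u : H) p + (R v : H) p
    rw [hR, hR, hR, add_mul]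
  · intro c u
    refine X_ext fun p => ?_
    change _ = c • (R u : H) p
    rw [hR, hR, smul_mul_assoc]

lemma exists_proj (j : ℕ) : ∃ T : X →ₗ[ℝ] X, ∀ F p, (T F : H) p = if p.1 = j then (F : H) p else 0 := by
  have h := fun F : X => exists_mul (fun i => if i = j then 1 else 0) 1
    (by intro i; split_ifs <;> simp) F
  choose R hR using h
  have hR' : ∀ F p, (R F : H) p = if p.1 = j then (F : H) p else 0 := by
    intro F p; rw [hR]; split_ifs <;> simp
  refine ⟨⟨⟨R, ?_⟩, ?_⟩, hR'⟩
  · intro u v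
    refine X_ext fun p => ?_
    change _ = (R u : H) p + (R v : H) p
    rw [hR', hR', hR']; split_ifs
    · rfl
    · simp
  · intro c u
    refine X_ext fun p => ?_
    change _ = c • (R u : H) p
    rw [hR', hR']; split_ifs
    · rfl
    · simp

lemma exists_block (j : ℕ) : ∃ F : X, ‖F‖ = 1 ∧ ∀ p : P, p.1 ≠ j → (F : H) p = 0 := by
  have hmem : Memℓp (fun p : P => if p.1 = j then wt p.2.1 p.2.2 • chi (cyl p.2.1 p.2.2) else 0) 2 := by
    refine memℓp_gen ?_
    have g : Summable fun m : ℕ => ((1:ℝ)/2) ^ m := summable_geometric_two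
    have g2 : Summable fun q : ℕ × ℕ => wt q.1 q.2 :=
      g.mul_of_nonneg g (fun _ => by positivity) (fun _ => by positivity)
    have g0 : Summable fun i : ℕ => if i = j then (1:ℝ) else 0 :=
      (hasSum_ite_eq j (1:ℝ)).summable
    have g3 : Summable fun p : P => (if p.1 = j then (1:ℝ) else 0) * wt p.2.1 p.2.2 :=
      g0.mul_of_nonneg g2 (fun i => by dsimp only; split_ifs <;> simp) (fun q => (wt_pos _ _).le)
    refine Summable.of_nonneg_of_le (fun p => by positivity) (fun p => ?_) g3
    rw [show (2 : ENNReal).toReal = (2 : ℕ) by simp, Real.rpow_natCast]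
    have w1 := wt_le p.2.1 p.2.2
    have w0 := wt_pos p.2.1 p.2.2
    split_ifs
    · rw [norm_smul, Real.norm_of_nonneg w0.le, one_mul]
      have c1 := norm_chi (cyl p.2.1 p.2.2)
      have c0 := norm_nonneg (chi (cyl p.2.1 p.2.2))
      have : wt p.2.1 p.2.2 * ‖chi (cyl p.2.1 p.2.2)‖ ≤ wt p.2.1 p.2.2 := mul_le_of_le_one_right w0.le c1
      have : 0 ≤ wt p.2.1 p.2.2 * ‖chi (cyl p.2.1 p.2.2)‖ := by positivity
      nlinarith
    · simp
  let F : X := ⟨⟨_, hmem⟩, by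
    intro i m b
    change (if i = j then _ else _) = wt m b • (chi (cyl m b) * if i = j then _ else _)
    have : wt 0 0 • chi (cyl 0 0) = 1 := by
      ext x
      rw [ContinuousMap.smul_apply, chi_of_mem (clopen_cyl 0 0) (by simp [cyl])]
      simp [wt]
    split_ifs
    · rw [this, mul_one]
    · simp⟩
  have hF : ∀ p : P, (F : H) p = if p.1 = j then wt p.2.1 p.2.2 • chi (cyl p.2.1 p.2.2) else 0 := fun p => rfl
  have hne : F ≠ 0 := by
    intro h
    have h1 := hF (j, 0, 0)
    rw [h] at h1
    have h2 := congrArg (fun f : E => f (fun _ => true)) h1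
    simp [chi_of_mem (clopen_cyl 0 0) (show (fun _ => true : K) ∈ cyl 0 0 by simp [cyl]), wt] at h2
  refine ⟨‖F‖⁻¹ • F, ?_, fun p hp => ?_⟩
  · rw [norm_smul, norm_inv, norm_norm, inv_mul_cancel₀ (norm_ne_zero_iff.2 hne)]
  · change ‖F‖⁻¹ • (F : H) p = 0
    rw [hF, if_neg hp, smul_zero]

lemma key (F : X) (hF : ‖F‖ = 1) (s : Finset (X →L[ℝ] ℝ)) {η δ : ℝ} (hη : 0 < η) (hδ : 0 < δ) :
    ∃ Y : X, ‖Y‖ ≤ 1 ∧ (∀ φ ∈ s, |φ (Y - F)| < η) ∧ ‖F - Y‖ > 2 - δ := by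
  wlog hδ1 : δ ≤ 1 generalizing δ
  · obtain ⟨Y, h1, h2, h3⟩ := this one_pos le_rfl
    exact ⟨Y, h1, h2, by linarith⟩
  have hs := hasSum_sq (F : H)
  have hF' : ‖(F : H)‖ = 1 := hF
  rw [hF', one_pow] at hs
  obtain ⟨S, hS⟩ : ∃ S : Finset P, 1 - δ / 4 < ∑ p ∈ S, ‖(F : H) p‖ ^ 2 :=
    (hs.eventually (lt_mem_nhds (show 1 - δ / 4 < 1 by linarith))).exists
  let d : ℝ := δ / 4 / (2 * (S.card + 1))
  have hd : 0 < d := by positivity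
  choose M hM using fun p : P => osc ((F : H) p) hd
  let N := S.sup M
  obtain ⟨R, hR⟩ := exists_R F
  have hRn : ∀ u : E, ‖u‖ ≤ 1 → ‖R u‖ ≤ 1 := by
    intro u hu
    rw [← hF]
    refine norm_mono fun p => ?_
    rw [hR]
    exact (norm_mul_le _ _).trans (by nlinarith [norm_nonneg ((F : H) p)])
  have hsum : ∀ φ : X →L[ℝ] ℝ, ∀ n, ∑ k ∈ Finset.range n, |φ (R (chi (bump N k)))| ≤ ‖φ‖ := by
    intro φ n
    refine sum_bump (φ.toLinearMap ∘ₗ R) (fun u hu => ?_) N n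
    exact (φ.le_opNorm _).trans (by nlinarith [hRn u hu, norm_nonneg φ])
  obtain ⟨n, hn⟩ := exists_nat_gt ((∑ φ ∈ s, ‖φ‖) / (η / 2))
  obtain ⟨k, hk⟩ : ∃ k, ∀ φ ∈ s, |φ (R (chi (bump N k)))| < η / 2 := by
    by_contra! hcon
    have h1 : ∀ k, η / 2 ≤ ∑ φ ∈ s, |φ (R (chi (bump N k)))| := by
      intro k
      obtain ⟨φ, hφ, h⟩ := hcon k
      exact h.trans (Finset.single_le_sum (f := fun φ : X →L[ℝ] ℝ => |φ (R (chi (bump N k)))|)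
        (fun _ _ => abs_nonneg _) hφ)
    have h2 : ∑ k ∈ Finset.range n, η / 2 ≤ ∑ φ ∈ s, ‖φ‖ :=
      (Finset.sum_le_sum fun k _ => h1 k).trans
        (by rw [Finset.sum_comm]; exact Finset.sum_le_sum fun φ _ => hsum φ n)
    rw [Finset.sum_const, Finset.card_range, nsmul_eq_mul] at h2
    rw [div_lt_iff₀ (by positivity)] at hn
    linarith
  set c := chi (bump N k) with hc
  refine ⟨F - (2 : ℝ) • R c, ?_, ?_, ?_⟩
  · rw [← hF]
    refine norm_mono fun p => (ContinuousMap.norm_le _ (norm_nonneg _)).2 fun x => ?_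
    change ‖(F : H) p x - (2 : ℝ) * (R c : H) p x‖ ≤ _
    rw [hR]
    refine le_trans ?_ (ContinuousMap.norm_coe_le_norm ((F : H) p) x)
    rw [ContinuousMap.mul_apply]
    by_cases hx : x ∈ bump N k
    · rw [hc, chi_of_mem (clopen_bump _ _) hx]
      apply le_of_eq
      rw [← norm_neg]; congr 1; ring
    · rw [hc, chi_of_notMem hx]; simp
  · intro φ hφ
    have := hk φ hφ
    rw [sub_sub_cancel_left, map_neg, map_smul, abs_neg, smul_eq_mul, abs_mul, abs_two]
    linarith
  · rw [sub_sub_cancel, norm_smul, Real.norm_two]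
    have h1 : 1 - δ / 2 ≤ ‖R c‖ ^ 2 := by
      have h2 : ∑ p ∈ S, ‖(R c : H) p‖ ^ 2 ≤ ‖R c‖ ^ 2 :=
        sum_le_hasSum S (fun p _ => by positivity) (hasSum_sq (R c : H))
      have h3 : ∑ p ∈ S, (‖(F : H) p‖ ^ 2 - 2 * d) ≤ ∑ p ∈ S, ‖(R c : H) p‖ ^ 2 := by
        refine Finset.sum_le_sum fun p hp => ?_
        have h4 := norm_bump hd.le (hM p N (Finset.le_sup hp)) k
        rw [hR]
        have h5 : ‖(F : H) p‖ ≤ 1 := hF' ▸ lp.norm_apply_le_norm (by norm_num) (F : H) p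
        have h6 := norm_nonneg (c * (F : H) p)
        have h7 := norm_nonneg ((F : H) p)
        rw [← hc] at h4
        by_cases h8 : ‖(F : H) p‖ ≤ d
        · nlinarith
        · nlinarith
      rw [Finset.sum_sub_distrib, Finset.sum_const, nsmul_eq_mul] at h3
      have h4 : (S.card : ℝ) * (2 * d) ≤ δ / 4 := by
        have : ((S.card : ℝ) + 1) * (2 * d) = δ / 4 := by simp only [d]; field_simp
        nlinarith
      linarith
    nlinarith [norm_nonneg (R c)]

lemma real_ineq {a b c e : ℝ} (a0 : 0 ≤ a) (b0 : 0 ≤ b) (c0 : 0 ≤ c) (a1 : 2 * c ≤ a + b)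
    (he : 0 ≤ e) (a2 : (a ^ 2 + b ^ 2) / 2 - c ^ 2 ≤ e) : a ≤ c + 2 * √e ∧ b ≤ c + 2 * √e := by
  have a3 := Real.sq_sqrt he
  have a4 := Real.sqrt_nonneg e
  set r := √e
  have s1 : ((a + b) / 2) ^ 2 ≤ (c + r) ^ 2 := by nlinarith [sq_nonneg (a - b)]
  have s2 : (a + b) / 2 ≤ c + r := (sq_le_sq₀ (by positivity) (by positivity)).1 s1
  have s3 : ((a - b) / 2) ^ 2 ≤ r ^ 2 := by nlinarith
  have s4 := abs_le.1 (abs_le_of_sq_le_sq s3 a4)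
  constructor <;> linarith [s4.1, s4.2]

lemma block_bound (F G : X) (i : ℕ) {M : ℕ} {ε r : ℝ}
    (hM : ∀ N, M ≤ N → ∀ x y : K, (∀ i < N, x i = y i) →
      |(F : H) (i, 0, 0) x - (F : H) (i, 0, 0) y| ≤ ε / 4) (hε : 0 < ε)
    (hab : ∀ p, ‖(F : H) p + (G : H) p‖ ≤ ‖(F : H) p‖ + 2 * r ∧
      ‖(F : H) p - (G : H) p‖ ≤ ‖(F : H) p‖ + 2 * r) (t : K) :
    ((1/2) ^ M * (1/2) ^ (2 ^ M)) * (|(G : H) (i, 0, 0) t| - ε / 4) ≤ 2 * r := by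
  obtain ⟨b, hb, htb⟩ := exists_code M t
  have hwb : (1/2) ^ M * (1/2) ^ (2 ^ M) ≤ wt M b := by
    simp only [wt]
    gcongr ?_ * ?_
    exact pow_le_pow_of_le_one (by norm_num) (by norm_num) hb.le
  have hwp := wt_pos M b
  obtain ⟨q1, q2⟩ := hab (i, M, b)
  have hr : 0 ≤ r := by
    have := norm_add_le ((F : H) (i, M, b) + (G : H) (i, M, b)) ((F : H) (i, M, b) - (G : H) (i, M, b))
    rw [add_add_sub_cancel, ← two_smul ℝ, norm_smul, Real.norm_two] at this
    linarith
  have eF := F.2 i M b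
  have eG := G.2 i M b
  generalize (F : H) (i, M, b) = F' at *
  generalize (G : H) (i, M, b) = G' at *
  generalize (F : H) (i, 0, 0) = f at *
  generalize (G : H) (i, 0, 0) = g at *
  have q3 : ‖F'‖ ≤ wt M b * (|f t| + ε / 4) := by
    refine (ContinuousMap.norm_le _ (by positivity)).2 fun z => ?_
    rw [eF, ContinuousMap.smul_apply, ContinuousMap.mul_apply, norm_smul,
      Real.norm_of_nonneg hwp.le]
    gcongr
    by_cases hz : z ∈ cyl M b
    · rw [chi_of_mem (clopen_cyl M b) hz, one_mul, Real.norm_eq_abs]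
      have := hM M le_rfl z t (fun i hi => (hz i hi).trans (htb i hi).symm)
      have := abs_sub_abs_le_abs_sub (f z) (f t)
      linarith
    · rw [chi_of_notMem hz, zero_mul, norm_zero]; positivity
  have q4 := (ContinuousMap.norm_coe_le_norm (F' + G') t).trans q1
  have q5 := (ContinuousMap.norm_coe_le_norm (F' - G') t).trans q2
  have fF : F' t = wt M b * f t := by
    rw [eF, ContinuousMap.smul_apply, ContinuousMap.mul_apply, chi_of_mem (clopen_cyl M b) htb,
      one_mul, smul_eq_mul]
  have fG : G' t = wt M b * g t := by
    rw [eG, ContinuousMap.smul_apply, ContinuousMap.mul_apply, chi_of_mem (clopen_cyl M b) htb,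
      one_mul, smul_eq_mul]
  rw [ContinuousMap.add_apply, fF, fG, ← mul_add, Real.norm_eq_abs, abs_mul, abs_of_pos hwp] at q4
  rw [ContinuousMap.sub_apply, fF, fG, ← mul_sub, Real.norm_eq_abs, abs_mul, abs_of_pos hwp] at q5
  have q6 : wt M b * (|f t| + |g t|) ≤ wt M b * (|f t| + ε / 4) + 2 * r := by
    have : |f t| + |g t| = max |f t + g t| |f t - g t| := by
      generalize f t = α
      generalize g t = β
      grind
    rw [this]
    rcases max_choice |f t + g t| |f t - g t| with h | h <;> rw [h] <;> linarith
  rcases le_or_gt (|g t| - ε / 4) 0 with h | h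
  · exact (mul_nonpos_of_nonneg_of_nonpos (by positivity) h).trans (by positivity)
  · exact (mul_le_mul_of_nonneg_right hwb h.le).trans (by linarith)

lemma hasSum_sq' {ι E : Type} [NormedAddCommGroup E] (F : lp (fun _ : ι => E) 2) :
    HasSum (fun p => ‖F p‖ ^ 2) (‖F‖ ^ 2) := by
  have := lp.hasSum_norm (p := 2) (by norm_num) F
  simpa using this

lemma gen {ι E : Type} [NormedAddCommGroup E] [NormedSpace ℝ E] (x : lp (fun _ : ι => E) 2)
    (hx : ‖x‖ = 1) (y : ℕ → lp (fun _ : ι => E) 2)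
    (h1 : Tendsto (fun n => ‖x + y n‖) atTop (𝓝 1))
    (h2 : Tendsto (fun n => ‖x - y n‖) atTop (𝓝 1))
    (hyp : ∀ r : ℕ → ℝ, Tendsto r atTop (𝓝 0) →
      (∀ n p, ‖x p + y n p‖ ≤ ‖x p‖ + 2 * r n ∧ ‖x p - y n p‖ ≤ ‖x p‖ + 2 * r n) →
      ∀ p, Tendsto (fun n => ‖y n p‖) atTop (𝓝 0)) :
    Tendsto (fun n => ‖y n‖) atTop (𝓝 0) := by
  let e : ℕ → ℝ := fun n => (‖x + y n‖ ^ 2 + ‖x - y n‖ ^ 2) / 2 - 1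
  have he : Tendsto e atTop (𝓝 0) := by
    have := (((h1.pow 2).add (h2.pow 2)).div_const 2).sub_const 1
    have h0 : ((1 : ℝ) ^ 2 + 1 ^ 2) / 2 - 1 = 0 := by norm_num
    rw [h0] at this
    exact this
  let d : ℕ → ι → ℝ := fun n p =>
    (‖x p + (y n) p‖ ^ 2 + ‖x p - (y n) p‖ ^ 2) / 2 - ‖x p‖ ^ 2
  have hsum : ∀ n, HasSum (d n) (e n) := by
    intro n
    have a1 := hasSum_sq' (x + y n)
    have a2 := hasSum_sq' (x - y n)
    have a3 := hasSum_sq' x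
    have := ((a1.add a2).div_const 2).sub a3
    rw [hx, one_pow] at this
    exact this
  have hc : ∀ n p, 2 * ‖x p‖ ≤ ‖x p + (y n) p‖ + ‖x p - (y n) p‖ := by
    intro n p
    have := norm_add_le (x p + (y n) p) (x p - (y n) p)
    rwa [add_add_sub_cancel, ← two_smul ℝ, norm_smul, Real.norm_two] at this
  have hc' : ∀ n p, 2 * ‖(y n) p‖ ≤ ‖x p + (y n) p‖ + ‖x p - (y n) p‖ := by
    intro n p
    have := norm_sub_le (x p + (y n) p) (x p - (y n) p)
    rwa [add_sub_sub_cancel, ← two_smul ℝ, norm_smul, Real.norm_two] at this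
  have hd0 : ∀ n p, 0 ≤ d n p := by
    intro n p
    have := hc n p
    have h0 := norm_nonneg (x p)
    simp only [d]
    nlinarith [sq_nonneg (‖x p + (y n) p‖ - ‖x p - (y n) p‖)]
  have hde : ∀ n p, d n p ≤ e n := fun n p => le_hasSum (hsum n) p fun q _ => hd0 n q
  have he0 : ∀ n, 0 ≤ e n := fun n => (hsum n).nonneg (hd0 n)
  have hab : ∀ n p, ‖x p + (y n) p‖ ≤ ‖x p‖ + 2 * √(e n) ∧
      ‖x p - (y n) p‖ ≤ ‖x p‖ + 2 * √(e n) := by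
    intro n p
    exact real_ineq (norm_nonneg _) (norm_nonneg _) (norm_nonneg _) (hc n p) (he0 n) (hde n p)
  have hsq : Tendsto (fun n => √(e n)) atTop (𝓝 0) := by
    simpa using he.sqrt
  have hcoord := hyp _ hsq hab
  have hsx := hasSum_sq' x
  have hz : Tendsto (fun n => ∑' p, max (‖(y n) p‖ ^ 2 - d n p) 0) atTop (𝓝 (∑' _ : ι, (0 : ℝ))) := by
    refine tendsto_tsum_of_dominated_convergence hsx.summable (fun p => ?_) (Eventually.of_forall fun n p => ?_)
    · refine squeeze_zero (fun _ => le_max_right _ _) (fun n => ?_)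
        (by simpa using (hcoord p).pow 2)
      exact max_le (by linarith [hd0 n p]) (by positivity)
    · rw [Real.norm_of_nonneg (le_max_right _ _)]
      refine max_le ?_ (by positivity)
      have := hc' n p
      simp only [d]
      nlinarith [sq_nonneg (‖x p + (y n) p‖ - ‖x p - (y n) p‖),
        norm_nonneg ((y n) p)]
  rw [tsum_zero] at hz
  have hfin : Tendsto (fun n => ‖y n‖ ^ 2) atTop (𝓝 0) := by
    refine squeeze_zero (fun _ => by positivity) (fun n => ?_) (by simpa using hz.add he)
    have hs1 : Summable fun p => max (‖(y n) p‖ ^ 2 - d n p) 0 := by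
      refine Summable.of_nonneg_of_le (fun _ => le_max_right _ _) (fun p => ?_) (hasSum_sq' (y n)).summable
      exact max_le (by linarith [hd0 n p]) (by positivity)
    refine hasSum_le (fun p => ?_) (hasSum_sq' (y n)) (hs1.hasSum.add (hsum n))
    linarith [le_max_left (‖(y n) p‖ ^ 2 - d n p) 0]
  simpa using hfin.sqrt

lemma mlur_coord (x : X) (y : ℕ → X) (r : ℕ → ℝ) (hsq : Tendsto r atTop (𝓝 0))
    (hab : ∀ n p, ‖(x : H) p + (y n : H) p‖ ≤ ‖(x : H) p‖ + 2 * r n ∧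
      ‖(x : H) p - (y n : H) p‖ ≤ ‖(x : H) p‖ + 2 * r n) :
    ∀ p, Tendsto (fun n => ‖(y n : H) p‖) atTop (𝓝 0) := by
  -- each block tends to zero
  have hblock : ∀ i, Tendsto (fun n => ‖(y n : H) (i, 0, 0)‖) atTop (𝓝 0) := by
    intro i
    rw [Metric.tendsto_atTop]
    intro ε hε
    obtain ⟨M, hM⟩ := osc ((x : H) (i, 0, 0)) (show 0 < ε / 4 by positivity)
    let w : ℝ := (1/2) ^ M * (1/2) ^ (2 ^ M)
    have hw : 0 < w := by positivity
    obtain ⟨n₀, hn₀⟩ := Metric.tendsto_atTop.1 hsq (w * (ε / 8)) (by positivity)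
    refine ⟨n₀, fun n hn => ?_⟩
    have hr := hn₀ n hn
    rw [Real.dist_eq, sub_zero] at hr
    have hr := (le_abs_self _).trans_lt hr
    rw [Real.dist_eq, sub_zero, abs_of_nonneg (norm_nonneg _)]
    refine lt_of_le_of_lt ((ContinuousMap.norm_le _ (show 0 ≤ ε / 2 by positivity)).2 fun t => ?_)
      (half_lt_self hε)
    have := block_bound x (y n) i hM hε (hab n) t
    have : w * (|(y n : H) (i, 0, 0) t| - ε / 4) < w * (ε / 4) := by linarith
    have := lt_of_mul_lt_mul_left this hw.le
    rw [Real.norm_eq_abs]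
    linarith
  have hcoord : ∀ p : P, Tendsto (fun n => ‖(y n : H) p‖) atTop (𝓝 0) := by
    rintro ⟨i, m, b⟩
    refine squeeze_zero (fun _ => norm_nonneg _) (fun n => ?_) (hblock i)
    rw [(y n).2 i m b, norm_smul, Real.norm_of_nonneg (wt_pos m b).le]
    refine (mul_le_of_le_one_left (norm_nonneg _) (wt_le m b)).trans ((norm_mul_le _ _).trans ?_)
    exact mul_le_of_le_one_left (norm_nonneg _) (norm_chi _)
  exact hcoord

lemma mlur (x : X) (hx : ‖x‖ = 1) (y : ℕ → X)
    (h1 : Tendsto (fun n => ‖x + y n‖) atTop (𝓝 1))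
    (h2 : Tendsto (fun n => ‖x - y n‖) atTop (𝓝 1)) :
    Tendsto (fun n => ‖y n‖) atTop (𝓝 0) :=
  gen (x : H) hx (fun n => (y n : H)) h1 h2 (fun r hr hab => mlur_coord x y r hr hab)

lemma d2p {X : Type} [NormedAddCommGroup X] [NormedSpace ℝ X]
    (key : ∀ F : X, ‖F‖ = 1 → ∀ s : Finset (X →L[ℝ] ℝ), ∀ {η δ : ℝ}, 0 < η → 0 < δ →
      ∃ Y : X, ‖Y‖ ≤ 1 ∧ (∀ φ ∈ s, |φ (Y - F)| < η) ∧ ‖F - Y‖ > 2 - δ)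
    (hex : ∃ G : X, ‖G‖ = 1) (W : Set X) (hW : W.Nonempty)
    (hV : ∃ V : Set X, IsOpen[weakTop X] V ∧ W = V ∩ {x : X | ‖x‖ ≤ 1}) : Metric.diam W = 2 := by
  obtain ⟨V, hVo, rfl⟩ := hV
  obtain ⟨x₀, hx₀V, hx₀⟩ := hW
  have hx₀' : ‖x₀‖ ≤ 1 := hx₀
  obtain ⟨U, hU, rfl⟩ := isOpen_induced_iff.1 hVo
  obtain ⟨I, u, hu, hIu⟩ := isOpen_pi_iff.1 hU _ hx₀V
  obtain ⟨η, hη, hball⟩ : ∃ η : ℝ, 0 < η ∧ ∀ φ ∈ I, Metric.ball (φ x₀) η ⊆ u φ := by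
    have h : ∀ᶠ η in 𝓝[>] (0:ℝ), ∀ φ ∈ I, Metric.ball (φ x₀) η ⊆ u φ := by
      rw [Finset.eventually_all]
      intro φ hφ
      obtain ⟨r, hr, hrs⟩ := Metric.isOpen_iff.1 (hu φ hφ).1 _ (hu φ hφ).2
      filter_upwards [Ioo_mem_nhdsGT hr] with η hη
      exact (Metric.ball_subset_ball hη.2.le).trans hrs
    obtain ⟨η, h1, h2⟩ := (h.and self_mem_nhdsWithin).exists
    exact ⟨η, h2, h1⟩
  have hmem : ∀ z : X, (∀ φ ∈ I, |φ (z - x₀)| < η) →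
      z ∈ (fun (x : X) (f : X →L[ℝ] ℝ) => f x) ⁻¹' U := by
    intro z hz
    refine hIu fun φ hφ => hball φ hφ ?_
    have := hz φ hφ
    rwa [map_sub] at this
  obtain ⟨G, hG⟩ := hex
  obtain ⟨Y₀, -, hY₀, hY₀n⟩ := key G hG I (show 0 < η / 4 by positivity) one_pos
  have hv : 1 < ‖Y₀ - G‖ := by rw [norm_sub_rev]; linarith
  set v := Y₀ - G with hvdef
  obtain ⟨t, ht, htn⟩ : ∃ t ∈ Set.Icc (0:ℝ) 2, ‖x₀ + t • v‖ = 1 := by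
    have hcont : ContinuousOn (fun t : ℝ => ‖x₀ + t • v‖) (Set.Icc 0 2) := by fun_prop
    refine intermediate_value_Icc (by norm_num) hcont ⟨by simpa using hx₀', ?_⟩
    have h1 := norm_sub_le (x₀ + (2:ℝ) • v) x₀
    rw [add_sub_cancel_left, norm_smul, Real.norm_two] at h1
    change 1 ≤ ‖x₀ + (2:ℝ) • v‖
    linarith
  set F := x₀ + t • v with hFdef
  have hFx : ∀ φ ∈ I, |φ (F - x₀)| ≤ η / 2 := by
    intro φ hφ
    rw [hFdef, add_sub_cancel_left, map_smul, smul_eq_mul, abs_mul, abs_of_nonneg ht.1]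
    have := hY₀ φ hφ
    nlinarith [ht.2, abs_nonneg (φ v)]
  have hsub : (fun (x : X) (f : X →L[ℝ] ℝ) => f x) ⁻¹' U ∩ {x : X | ‖x‖ ≤ 1} ⊆ Metric.closedBall 0 1 := by
    rintro z ⟨-, hz⟩
    simpa using hz
  have hbdd := Metric.isBounded_closedBall.subset hsub
  apply le_antisymm
  · refine (Metric.diam_mono hsub Metric.isBounded_closedBall).trans ?_
    simpa using Metric.diam_closedBall (x := (0 : X)) (zero_le_one)
  · refine le_of_forall_pos_le_add fun δ hδ => ?_
    obtain ⟨Y, hY1, hY2, hY3⟩ := key F htn I (show 0 < η / 2 by positivity) hδ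
    have h1 : dist F Y ≤ Metric.diam _ := Metric.dist_le_diam_of_mem hbdd
      ⟨hmem F fun φ hφ => (hFx φ hφ).trans_lt (by linarith), htn.le⟩
      ⟨hmem Y fun φ hφ => ?_, hY1⟩
    · rw [dist_eq_norm] at h1; linarith
    · rw [← sub_add_sub_cancel Y F x₀, map_add]
      exact (abs_add_le _ _).trans_lt (by linarith [hFx φ hφ, hY2 φ hφ])

lemma ccs (δ : ℝ) (hδ : 0 < δ) :
    ∃ (n : ℕ) (f : Fin n → (X →L[ℝ] ℝ)) (ε : Fin n → ℝ) (lam : Fin n → ℝ),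
          0 < n ∧ (∀ j, ‖f j‖ = 1) ∧ (∀ j, 0 < ε j) ∧ (∀ j, 0 ≤ lam j) ∧
          (∑ j, lam j) = 1 ∧
          Metric.diam {w : X | ∃ y : Fin n → X,
            (∀ j, ‖y j‖ ≤ 1 ∧ f j (y j) > 1 - ε j) ∧ w = ∑ j, lam j • y j} < δ := by
  obtain ⟨n, hn⟩ := exists_nat_gt (1 / (δ / 8) ^ 2)
  have hn0' : (0 : ℝ) < n := lt_trans (by positivity) hn
  have hn0 : 0 < n := by exact_mod_cast hn0'
  set r : ℝ := δ / 8 with hr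
  have hr0 : 0 < r := by positivity
  have hnr : 1 < n * r ^ 2 := by rwa [div_lt_iff₀ (by positivity)] at hn
  choose T hT using exists_proj
  have hTn : ∀ j F, ‖T j F‖ ≤ ‖F‖ := by
    intro j F
    refine norm_mono fun p => ?_
    rw [hT]; split_ifs
    · exact le_rfl
    · simp
  have hpyth : ∀ j F, ‖F‖ ^ 2 = ‖T j F‖ ^ 2 + ‖F - T j F‖ ^ 2 := by
    intro j F
    refine (hasSum_sq (F : H)).unique ?_
    have h := (hasSum_sq (T j F : H)).add (hasSum_sq ((F - T j F : X) : H))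
    convert! h using 2 with p
    change _ = ‖(T j F : H) p‖ ^ 2 + ‖(F : H) p - (T j F : H) p‖ ^ 2
    rw [hT]; split_ifs <;> simp
  choose e he1 he0 using exists_block
  have hTe : ∀ j, T j (e j) = e j := by
    intro j
    refine X_ext fun p => ?_
    rw [hT]; split_ifs with h
    · rfl
    · rw [he0 j p h]
  choose g hg1 hg2 using fun j => exists_dual_vector ℝ (e j) (by rw [he1]; norm_num)
  let f : ℕ → (X →L[ℝ] ℝ) := fun j => (g j).comp ((T j).mkContinuous 1 (fun F => (one_mul ‖F‖).symm ▸ hTn j F))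
  have hf : ∀ j F, f j F = g j (T j F) := fun j F => rfl
  have hfle : ∀ j F, |f j F| ≤ ‖T j F‖ := by
    intro j F
    rw [hf]
    have := (g j).le_opNorm (T j F)
    rwa [hg1 j, one_mul] at this
  have hf1 : ∀ j, ‖f j‖ = 1 := by
    intro j
    apply le_antisymm
    · refine ContinuousLinearMap.opNorm_le_bound _ zero_le_one fun F => ?_
      rw [one_mul]
      exact (hfle j F).trans (hTn j F)
    · have := (f j).le_opNorm (e j)
      rw [hf, hTe, hg2, he1, mul_one] at this
      exact (le_abs_self _).trans this
  refine ⟨n, fun j => f j, fun _ => r ^ 2 / 2, fun _ => (n : ℝ)⁻¹, hn0, fun j => hf1 j,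
    fun _ => by positivity, fun _ => by positivity, by simp [hn0.ne'], ?_⟩
  have hsub : {w : X | ∃ y : Fin n → X,
      (∀ j, ‖y j‖ ≤ 1 ∧ f j (y j) > 1 - r ^ 2 / 2) ∧ w = ∑ j, (n : ℝ)⁻¹ • y j} ⊆
      Metric.closedBall 0 (2 * r) := by
    rintro w ⟨y, hy, rfl⟩
    rw [mem_closedBall_zero_iff]
    have hsplit : ∑ j, (n : ℝ)⁻¹ • y j =
        (n : ℝ)⁻¹ • (∑ j : Fin n, T j (y j)) + (n : ℝ)⁻¹ • ∑ j : Fin n, (y j - T j (y j)) := by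
      rw [← smul_add, ← Finset.sum_add_distrib, Finset.smul_sum]
      exact Finset.sum_congr rfl fun j _ => by rw [add_sub_cancel]
    have h2 : ‖∑ j : Fin n, (y j - T j (y j))‖ ≤ n * r := by
      refine (norm_sum_le _ _).trans ?_
      calc _ ≤ ∑ _j : Fin n, r := Finset.sum_le_sum fun j _ => ?_
        _ = n * r := by simp
      have a1 := hpyth j (y j)
      have a2 := (hy j).2.trans_le ((le_abs_self _).trans (hfle j (y j)))
      have a3 := (hy j).1
      have a4 : ‖y j‖ ^ 2 ≤ 1 := pow_le_one₀ (norm_nonneg _) a3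
      have a5 : 1 - r ^ 2 ≤ ‖T j (y j)‖ ^ 2 := by
        nlinarith [sq_nonneg (‖T j (y j)‖ - 1)]
      exact abs_le_of_sq_le_sq' (by linarith) hr0.le |>.2
    have h1 : ‖∑ j : Fin n, T j (y j)‖ ^ 2 ≤ n := by
      have b1 := hasSum_sq ((∑ j : Fin n, T j (y j) : X) : H)
      have b2 : HasSum (fun p => ∑ j : Fin n, ‖(y j : H) p‖ ^ 2) (∑ j : Fin n, ‖(y j : H)‖ ^ 2) :=
        hasSum_sum fun j _ => hasSum_sq (y j : H)
      have b3 : ∑ j : Fin n, ‖(y j : H)‖ ^ 2 ≤ n := by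
        calc _ ≤ ∑ _j : Fin n, (1:ℝ) := Finset.sum_le_sum fun j _ =>
              pow_le_one₀ (norm_nonneg _) (hy j).1
          _ = n := by simp
      refine (hasSum_le (fun p => ?_) b1 b2).trans b3
      have b4 : ((∑ j : Fin n, T j (y j) : X) : H) p = ∑ j : Fin n, if p.1 = j then (y j : H) p else 0 := by
        rw [Submodule.coe_sum, lp.coeFn_sum, Finset.sum_apply]
        exact Finset.sum_congr rfl fun j _ => hT j (y j) p
      rw [b4]
      by_cases hp : p.1 < n
      · rw [Finset.sum_eq_single (⟨p.1, hp⟩ : Fin n)]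
        · rw [if_pos rfl]
          exact Finset.single_le_sum (f := fun j : Fin n => ‖(y j : H) p‖ ^ 2)
            (fun _ _ => by positivity) (Finset.mem_univ _)
        · intro j _ hj
          rw [if_neg]
          intro h; exact hj (Fin.ext h.symm)
        · exact fun h => absurd (Finset.mem_univ _) h
      · rw [Finset.sum_eq_zero]
        · rw [norm_zero, zero_pow two_ne_zero]; exact Finset.sum_nonneg fun _ _ => sq_nonneg _
        · intro j _
          rw [if_neg]; intro h; exact hp (h ▸ j.2)
    have h1' : ‖∑ j : Fin n, T j (y j)‖ ≤ n * r := by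
      refine abs_le_of_sq_le_sq' ?_ (by positivity) |>.2
      nlinarith
    rw [hsplit]
    refine (norm_add_le _ _).trans ?_
    rw [norm_smul, norm_smul, norm_inv, Real.norm_of_nonneg hn0'.le, ← mul_add, inv_mul_le_iff₀ hn0']
    linarith
  calc _ ≤ Metric.diam (Metric.closedBall (0 : X) (2 * r)) :=
        Metric.diam_mono hsub Metric.isBounded_closedBall
    _ ≤ 2 * (2 * r) := Metric.diam_closedBall (by positivity)
    _ < δ := by rw [hr]; linarith

lemma ld2p (f : X →L[ℝ] ℝ) (ε : ℝ) (δ : ℝ) (hδ : 0 < δ) (x : X) (hfx : f x > 1 - ε) (hx : ‖x‖ = 1) :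
    ∃ y : X, ‖y‖ ≤ 1 ∧ f y > 1 - ε ∧ ‖x - y‖ > 2 - δ := by
  obtain ⟨Y, h1, h2, h3⟩ := key x hx {f} (show 0 < f x - (1 - ε) by linarith) hδ
  refine ⟨Y, h1, ?_, h3⟩
  have := (abs_lt.1 (h2 f (by simp))).1
  rw [map_sub] at this
  linarith

end MlurEx

/-- There exists a Banach space which is MLUR, has the diameter 2 property, has the
local diameter 2 property +, and has finite convex combinations of slices of its unit
ball of arbitrarily small diameter. -/
theorem exists_MLUR_D2P_LD2Pplus_small_ccs :
    ∃ (X : Type) (_ : NormedAddCommGroup X) (_ : NormedSpace ℝ X),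
      CompleteSpace X ∧
      -- MLUR
      (∀ x : X, ‖x‖ = 1 → ∀ y : ℕ → X,
        Tendsto (fun n => ‖x + y n‖) atTop (𝓝 1) →
        Tendsto (fun n => ‖x - y n‖) atTop (𝓝 1) →
        Tendsto (fun n => ‖y n‖) atTop (𝓝 0)) ∧
      -- D2P
      (∀ W : Set X, W.Nonempty →
        (∃ V : Set X, IsOpen[weakTop X] V ∧ W = V ∩ {x : X | ‖x‖ ≤ 1}) →
        Metric.diam W = 2) ∧
      -- LD2P+
      (∀ f : X →L[ℝ] ℝ, ‖f‖ = 1 → ∀ ε : ℝ, 0 < ε → ∀ δ : ℝ, 0 < δ →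
        ∀ x : X, ‖x‖ ≤ 1 → f x > 1 - ε → ‖x‖ = 1 →
          ∃ y : X, ‖y‖ ≤ 1 ∧ f y > 1 - ε ∧ ‖x - y‖ > 2 - δ) ∧
      -- convex combinations of slices with arbitrarily small diameter
      (∀ δ : ℝ, 0 < δ →
        ∃ (n : ℕ) (f : Fin n → (X →L[ℝ] ℝ)) (ε : Fin n → ℝ) (lam : Fin n → ℝ),
          0 < n ∧ (∀ j, ‖f j‖ = 1) ∧ (∀ j, 0 < ε j) ∧ (∀ j, 0 ≤ lam j) ∧
          (∑ j, lam j) = 1 ∧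
          Metric.diam {w : X | ∃ y : Fin n → X,
            (∀ j, ‖y j‖ ≤ 1 ∧ f j (y j) > 1 - ε j) ∧ w = ∑ j, lam j • y j} < δ) := by
  exact ⟨MlurEx.X, inferInstance, inferInstance, inferInstance, MlurEx.mlur,
    MlurEx.d2p MlurEx.key (let ⟨G, hG, _⟩ := MlurEx.exists_block 0; ⟨G, hG⟩),
    fun f _ ε _ δ hδ x _ hfx hx => MlurEx.ld2p f ε δ hδ x hfx hx, MlurEx.ccs⟩
end

section
/- A Banach space X has the local diameter 2 property + if and only if its dual has the weak* local diameter 2 property +, i.e. for every x ∈ S_X, every ε > 0, every δ > 0, and every x* in the weak* slice S(x,ε) with ‖x*‖ = 1 there exists y* ∈ S(x,ε) with ‖x* − y*‖ > 2 − δ. -/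
/-- A functional almost attains its norm on the unit ball. -/
lemma exists_almost_norming {X : Type*} [NormedAddCommGroup X] [NormedSpace ℝ X]
    (f : X →L[ℝ] ℝ) (r : ℝ) (h : r < ‖f‖) : ∃ u : X, ‖u‖ ≤ 1 ∧ r < f u := by
  obtain ⟨u, hu, hr⟩ := f.exists_lt_apply_of_lt_opNorm h
  rw [Real.norm_eq_abs] at hr
  rcases le_total 0 (f u) with h0 | h0
  · exact ⟨u, hu.le, by rwa [abs_of_nonneg h0] at hr⟩
  · exact ⟨-u, by rw [norm_neg]; exact hu.le, by rw [abs_of_nonpos h0] at hr; simpa using hr⟩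

lemma apply_le_one {X : Type*} [NormedAddCommGroup X] [NormedSpace ℝ X]
    (f : X →L[ℝ] ℝ) (hf : ‖f‖ ≤ 1) (x : X) : f x ≤ ‖x‖ := by
  have h1 := f.le_opNorm x
  have h2 := le_abs_self (f x)
  rw [Real.norm_eq_abs] at h1
  nlinarith [norm_nonneg x]

/-- Slices may be shrunk. -/
lemma shrink_slice {E : Type*} [NormedAddCommGroup E] [NormedSpace ℝ E]
    (φ : E →L[ℝ] ℝ) (hφ : ‖φ‖ ≤ 1) (x u : E) (hx : ‖x‖ ≤ 1) (hu : ‖u‖ ≤ 1)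
    (ε δ l : ℝ) (hε : 0 < ε) (hδ : 0 < δ) (hl : l = ε + 2 * ε / δ)
    (h : φ x + l * φ u > l + 1 - ε) :
    ∃ v : E, ∃ d : ℝ, ‖v‖ = 1 ∧ 0 < d ∧ d ≤ δ / 2 ∧ φ v > 1 - d ∧
      ∀ ψ : E →L[ℝ] ℝ, ‖ψ‖ ≤ 1 → ψ v > 1 - d → ψ x > 1 - ε := by
  have hq : 0 < 2 * ε / δ := by positivity
  have hqd : 2 * ε / δ * δ = 2 * ε := by field_simp
  set q := 2 * ε / δ
  have hl0 : 0 < l := by linarith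
  set w := x + l • u with hw
  have hφw : φ w > l + 1 - ε := by simpa [hw] using h
  have hNφ := apply_le_one φ hφ w
  have hNl : ‖w‖ ≤ 1 + l := by
    calc ‖w‖ ≤ ‖x‖ + ‖l • u‖ := norm_add_le _ _
      _ ≤ 1 + l := by
        rw [norm_smul, Real.norm_eq_abs, abs_of_pos hl0]
        nlinarith
  have hN : 0 < ‖w‖ := by linarith
  have key : ∀ ψ : E →L[ℝ] ℝ, (ψ (‖w‖⁻¹ • w) > 1 - (1 - (l + 1 - ε) / ‖w‖) ↔
      ψ w > l + 1 - ε) := by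
    intro ψ
    rw [map_smul, smul_eq_mul, sub_sub_cancel, inv_mul_eq_div, gt_iff_lt,
      div_lt_div_iff_of_pos_right hN]
  refine ⟨‖w‖⁻¹ • w, 1 - (l + 1 - ε) / ‖w‖, ?_, ?_, ?_, (key φ).2 hφw, ?_⟩
  · rw [norm_smul, norm_inv, norm_norm, inv_mul_cancel₀ hN.ne']
  · rw [sub_pos, div_lt_one hN]; linarith
  · rw [sub_le_comm, le_div_iff₀ hN]
    by_cases h2 : 1 - δ / 2 ≤ 0
    · nlinarith
    · push Not at h2
      nlinarith
  · intro ψ hψ hv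
    have h1 := (key ψ).1 hv
    have h2 := apply_le_one ψ hψ u
    have h3 : ψ w = ψ x + l * ψ u := by simp [hw]
    nlinarith

/-- A Banach space `X` has the local diameter 2 property + if and only if its dual has the
weak* local diameter 2 property +. -/
theorem LD2P_plus_iff_weak_star_LD2P_plus {X : Type*} [NormedAddCommGroup X]
    [NormedSpace ℝ X] [CompleteSpace X] :
    (∀ f : X →L[ℝ] ℝ, ‖f‖ = 1 → ∀ ε : ℝ, 0 < ε → ∀ δ : ℝ, 0 < δ →
      ∀ x : X, ‖x‖ ≤ 1 → f x > 1 - ε → ‖x‖ = 1 →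
        ∃ y : X, ‖y‖ ≤ 1 ∧ f y > 1 - ε ∧ ‖x - y‖ > 2 - δ) ↔
    (∀ x : X, ‖x‖ = 1 → ∀ ε : ℝ, 0 < ε → ∀ δ : ℝ, 0 < δ →
      ∀ f : X →L[ℝ] ℝ, ‖f‖ ≤ 1 → f x > 1 - ε → ‖f‖ = 1 →
        ∃ g : X →L[ℝ] ℝ, ‖g‖ ≤ 1 ∧ g x > 1 - ε ∧ ‖f - g‖ > 2 - δ) := by
  constructor
  · intro H x hx ε hε δ hδ f hf1 hfx hf
    have hq : 0 < 2 * ε / δ := by positivity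
    obtain ⟨l, hl⟩ : ∃ l, l = ε + 2 * ε / δ := ⟨_, rfl⟩
    have hl0 : 0 < l := by linarith
    have ht : 0 < (f x - (1 - ε)) / l := div_pos (by linarith) hl0
    obtain ⟨u, hu, hfu⟩ := exists_almost_norming f (1 - (f x - (1 - ε)) / l) (by linarith)
    have hlu : l * (1 - (f x - (1 - ε)) / l) < l * f u := mul_lt_mul_of_pos_left hfu hl0
    have hlu2 : l * (1 - (f x - (1 - ε)) / l) = l - (f x - (1 - ε)) := by field_simp
    obtain ⟨v, d, hv, hd, hdδ, hfv, hs⟩ :=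
      shrink_slice f hf1 x u hx.le hu ε δ l hε hδ hl (by linarith)
    obtain ⟨y, hy, hfy, hvy⟩ := H f hf d hd d hd v hv.le hfv hv
    obtain ⟨g, hg, hgv⟩ := exists_dual_vector'' ℝ (v - y)
    have hgv' : g v - g y = ‖v - y‖ := by rw [← map_sub]; simpa using hgv
    have h1 := apply_le_one g hg v
    have h2 := apply_le_one g hg (-y)
    rw [norm_neg, map_neg] at h2
    refine ⟨g, hg, hs g hg (by linarith), ?_⟩
    have h3 := (f - g).le_opNorm y
    have h4 := le_abs_self ((f - g) y)
    rw [Real.norm_eq_abs] at h3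
    have h5 : (f - g) y = f y - g y := rfl
    have h6 : ‖f - g‖ * ‖y‖ ≤ ‖f - g‖ := mul_le_of_le_one_right (norm_nonneg _) hy
    linarith
  · intro H f hf ε hε δ hδ x hx1 hfx hx
    have hq : 0 < 2 * ε / δ := by positivity
    obtain ⟨l, hl⟩ : ∃ l, l = ε + 2 * ε / δ := ⟨_, rfl⟩
    obtain ⟨h, hh, hhx⟩ := exists_dual_vector'' ℝ x
    have hhx' : h x = 1 := by simpa [hx] using hhx
    let J : X → ((X →L[ℝ] ℝ) →L[ℝ] ℝ) := fun z => ContinuousLinearMap.apply ℝ ℝ z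
    have hJ : ∀ z, ‖z‖ ≤ 1 → ‖J z‖ ≤ 1 := by
      intro z hz
      refine ContinuousLinearMap.opNorm_le_bound _ zero_le_one fun k => ?_
      have := k.le_opNorm z
      have h6 : ‖k‖ * ‖z‖ ≤ ‖k‖ := mul_le_of_le_one_right (norm_nonneg _) hz
      simp only [J, ContinuousLinearMap.apply_apply]
      linarith
    obtain ⟨v, d, hv, hd, hdδ, hfv, hs⟩ :=
      shrink_slice (J x) (hJ x hx1) f h hf.le hh ε δ l hε hδ hl (by
        simp only [J, ContinuousLinearMap.apply_apply]
        rw [hhx']; linarith)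
    obtain ⟨g, hg, hgx, hvg⟩ := H x hx d hd d hd v hv.le hfv hv
    obtain ⟨y, hy, hvy⟩ := exists_almost_norming (v - g) _ hvg
    have h0 : (v - g) y = v y - g y := rfl
    have h1 := apply_le_one v hv.le y
    have h2 := apply_le_one g hg (-y)
    rw [norm_neg, map_neg] at h2
    refine ⟨y, hy, hs (J y) (hJ y hy) (show v y > 1 - d by linarith), ?_⟩
    have h3 := apply_le_one g hg (x - y)
    rw [map_sub] at h3
    linarith
end

section
/- The space c₀ of real sequences converging to 0 with the supremum norm does not have the local diameter 2 property +: taking x* = e₁* (the first coordinate functional) and x = e₁ (the first unit vector), for every 0 < ε ≤ 1, e₁ belongs to the slice S(e₁*,ε) and ‖e₁‖ = 1, yet every y ∈ S(e₁*,ε) satisfies ‖e₁ − y‖ ≤ 1. -/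
open Filter Topology

/-- The first unit vector `e₁` in `c₀ = C₀(ℕ, ℝ)`, the space of real sequences
converging to `0` with the supremum norm. -/
noncomputable def e1 : ZeroAtInftyContinuousMap ℕ ℝ where
  toFun := fun n => if n = 0 then 1 else 0
  continuous_toFun := continuous_of_discreteTopology
  zero_at_infty' := by
    rw [cocompact_eq_cofinite, Nat.cofinite_eq_atTop]
    refine tendsto_nhds_of_eventually_eq ?_
    filter_upwards [Filter.eventually_ge_atTop 1] with n hn
    simp [Nat.one_le_iff_ne_zero.mp hn]

/-- `c₀` does not have the LD2P+: with `x* = e₁*` (evaluation at the first coordinate)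
and `x = e₁`, for every `0 < ε ≤ 1` the point `e₁` is a norm-one element of the slice
`S(e₁*, ε)`, yet every `y` in this slice satisfies `‖e₁ - y‖ ≤ 1`. -/
theorem c0_fails_LD2P_plus :
    ∀ ε : ℝ, 0 < ε → ε ≤ 1 →
      (‖e1‖ = 1 ∧ e1 0 > 1 - ε) ∧
      ∀ y : ZeroAtInftyContinuousMap ℕ ℝ, ‖y‖ ≤ 1 → y 0 > 1 - ε → ‖e1 - y‖ ≤ 1 := by
  have hbound : ∀ f : ZeroAtInftyContinuousMap ℕ ℝ, (∀ n, |f n| ≤ 1) → ‖f‖ ≤ 1 := by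
    intro f hf
    rw [← ZeroAtInftyContinuousMap.norm_toBCF_eq_norm]
    exact (BoundedContinuousFunction.norm_le zero_le_one).2 hf
  have hcoe : ∀ (f : ZeroAtInftyContinuousMap ℕ ℝ) (n : ℕ), |f n| ≤ ‖f‖ := by
    intro f n
    rw [← ZeroAtInftyContinuousMap.norm_toBCF_eq_norm]
    exact f.toBCF.norm_coe_le_norm n
  have he : ∀ n, e1 n = if n = 0 then 1 else 0 := fun n => rfl
  intro ε h0 h1
  refine ⟨⟨le_antisymm (hbound _ ?_) ?_, ?_⟩, ?_⟩
  · intro n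
    rw [he]
    split_ifs <;> simp
  · simpa [he] using hcoe e1 0
  · rw [he]
    simp [h0]
  · intro y hy hy0
    refine hbound _ fun n => ?_
    have hn := abs_le.1 ((hcoe y n).trans hy)
    rw [ZeroAtInftyContinuousMap.sub_apply, he, abs_le]
    split_ifs with h
    · subst h
      constructor <;> linarith
    · constructor <;> linarith
end

section
/- Let X be a Banach space, ε > 0 and x ∈ S_X. Then for every x* ∈ S(x,ε) ∩ S_{X*} which attains its norm and every 0 < δ < ε, there exists y ∈ S_X such that x* ∈ S(y,δ) and S(y,δ) ⊆ S(x,ε). -/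
/-- Weak*-version of the Kadets–Ivakhno subslice lemma: if `x ∈ S_X`, `ε > 0`,
`x* ∈ S(x,ε) ∩ S_{X*}` attains its norm, and `0 < δ < ε`, then there exists `y ∈ S_X`
with `x* ∈ S(y,δ)` and `S(y,δ) ⊆ S(x,ε)` (weak* slices of the dual unit ball). -/
theorem weak_star_subslice {X : Type*} [NormedAddCommGroup X] [NormedSpace ℝ X]
    [CompleteSpace X] (ε : ℝ) (hε : 0 < ε) (x : X) (hx : ‖x‖ = 1)
    (f : X →L[ℝ] ℝ) (hf : ‖f‖ = 1) (hfx : f x > 1 - ε)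
    (hattain : ∃ z : X, ‖z‖ = 1 ∧ f z = 1)
    (δ : ℝ) (hδ : 0 < δ) (hδε : δ < ε) :
    ∃ y : X, ‖y‖ = 1 ∧ f y > 1 - δ ∧
      ∀ g : X →L[ℝ] ℝ, ‖g‖ ≤ 1 → g y > 1 - δ → g x > 1 - ε := by
  obtain ⟨z, hz, hfz⟩ := hattain
  have hcont : Continuous (fun t : ℝ => (1 - δ) * ‖x + t • z‖ - t) := by fun_prop
  have hq : 0 < ε / δ := div_pos hε hδ
  have hqd : δ * (ε / δ) = ε := by field_simp
  have hT0 : (0 : ℝ) ≤ ε + ε / δ := by linarith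
  have h0 : 1 - ε ≤ (1 - δ) * ‖x + (0 : ℝ) • z‖ - 0 := by
    simp only [zero_smul, add_zero, hx]; linarith
  have hT : (1 - δ) * ‖x + (ε + ε / δ) • z‖ - (ε + ε / δ) ≤ 1 - ε := by
    rcases le_total δ 1 with h | h
    · have hn : ‖x + (ε + ε / δ) • z‖ ≤ 1 + (ε + ε / δ) := by
        refine (norm_add_le _ _).trans ?_
        rw [norm_smul, hx, hz, Real.norm_of_nonneg hT0, mul_one]
      have := mul_le_mul_of_nonneg_left hn (sub_nonneg.2 h)
      have h2 : 0 < δ * ε := mul_pos hδ hε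
      linarith
    · have : (1 - δ) * ‖x + (ε + ε / δ) • z‖ ≤ 0 :=
        mul_nonpos_of_nonpos_of_nonneg (by linarith) (norm_nonneg _)
      linarith
  obtain ⟨t, ht, hEq⟩ := intermediate_value_Icc' hT0 hcont.continuousOn ⟨hT, h0⟩
  have ht0 : 0 ≤ t := ht.1
  simp only at hEq
  have hfxt : f (x + t • z) = f x + t := by simp [hfz]
  have hpos : 0 < ‖x + t • z‖ := by
    rw [norm_pos_iff]
    intro h
    rw [h, map_zero] at hfxt
    rw [h, norm_zero] at hEq
    linarith
  refine ⟨‖x + t • z‖⁻¹ • (x + t • z), ?_, ?_, ?_⟩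
  · rw [norm_smul, norm_inv, norm_norm, inv_mul_cancel₀ hpos.ne']
  · rw [map_smul, hfxt, smul_eq_mul, gt_iff_lt, inv_mul_eq_div, lt_div_iff₀ hpos]
    linarith
  · intro g hg hgy
    rw [map_smul, smul_eq_mul, gt_iff_lt, inv_mul_eq_div, lt_div_iff₀ hpos, map_add, map_smul,
      smul_eq_mul] at hgy
    have hgz : g z ≤ 1 := by
      have h1 := g.le_opNorm z
      rw [hz, mul_one] at h1
      exact (le_abs_self _).trans (h1.trans hg)
    have := mul_le_mul_of_nonneg_left hgz ht0
    linarith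
end

section
/- Let Y be a Banach space with the local diameter 2 property + and let X be a closed subspace of Y which is an almost isometric ideal in Y. Then X has the local diameter 2 property +. -/
/-- A closed subspace `X` of a Banach space `Y` is an almost isometric ideal (ai-ideal)
if for every `ε > 0` and every finite-dimensional subspace `E ⊆ Y` there is a linear map
`T : E → X` fixing `X ∩ E` with `(1-ε)‖e‖ ≤ ‖Te‖ ≤ (1+ε)‖e‖` for all `e ∈ E`. -/
def IsAiIdeal {Y : Type*} [NormedAddCommGroup Y] [NormedSpace ℝ Y]
    (X : Subspace ℝ Y) : Prop :=
  ∀ ε : ℝ, 0 < ε → ∀ E : Subspace ℝ Y, FiniteDimensional ℝ E →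
    ∃ T : E →ₗ[ℝ] X,
      (∀ e : E, (e : Y) ∈ X → ((T e : X) : Y) = (e : Y)) ∧
      (∀ e : E, (1 - ε) * ‖(e : Y)‖ ≤ ‖((T e : X) : Y)‖ ∧
        ‖((T e : X) : Y)‖ ≤ (1 + ε) * ‖(e : Y)‖)

open Filter Topology in
theorem exists_ext_aux {Y : Type*} [NormedAddCommGroup Y] [NormedSpace ℝ Y]
    (X : Subspace ℝ Y) (hX : IsAiIdeal X) (f : X →L[ℝ] ℝ) (hf : ‖f‖ = 1) :
    ∃ g : Y →L[ℝ] ℝ, ‖g‖ = 1 ∧ (∀ x : X, g x = f x) ∧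
      ∀ (x : X) (z : Y) (c η : ℝ), c < g z → 0 < η →
        ∃ w : X, c < f w ∧ ‖w‖ ≤ (1 + η) * ‖z‖ ∧
          (1 - η) * ‖(x : Y) - z‖ ≤ ‖x - w‖ := by
  classical
  have h1 : ∀ i : Finset Y × ℕ, 0 < 1 / ((i.2 : ℝ) + 1) := fun i => by positivity
  choose T hT1 hT2 using fun i : Finset Y × ℕ =>
    hX (1 / ((i.2 : ℝ) + 1)) (h1 i) (Submodule.span ℝ (i.1 : Set Y))
      (FiniteDimensional.span_finset ℝ i.1)
  let U : Ultrafilter (Finset Y × ℕ) := Ultrafilter.of atTop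
  have hU : (U : Filter (Finset Y × ℕ)) ≤ atTop := Ultrafilter.of_le _
  let F : Finset Y × ℕ → Y → ℝ := fun i y =>
    if h : y ∈ Submodule.span ℝ (i.1 : Set Y) then f (T i ⟨y, h⟩) else 0
  have hmem : ∀ y : Y, ∀ᶠ i in (U : Filter (Finset Y × ℕ)),
      y ∈ Submodule.span ℝ (i.1 : Set Y) := by
    intro y
    apply hU
    filter_upwards [eventually_ge_atTop (({y} : Finset Y), 0)] with i hi
    exact Submodule.subset_span (hi.1 (Finset.mem_singleton_self y))
  have heps : Tendsto (fun i : Finset Y × ℕ => 1 / ((i.2 : ℝ) + 1)) U (𝓝 0) := by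
    have h2 : Tendsto (fun i : Finset Y × ℕ => i.2) atTop atTop := by
      rw [← prod_atTop_atTop_eq]; exact tendsto_snd
    exact (tendsto_one_div_add_atTop_nhds_zero_nat.comp h2).mono_left hU
  have hFb : ∀ i y, |F i y| ≤ (1 + 1 / ((i.2 : ℝ) + 1)) * ‖y‖ := by
    intro i y
    by_cases h : y ∈ Submodule.span ℝ (i.1 : Set Y)
    · simp only [F, h, dif_pos]
      have := f.le_opNorm (T i ⟨y, h⟩)
      rw [hf, one_mul] at this
      exact this.trans (hT2 i ⟨y, h⟩).2
    · simp only [F, h, dif_neg, not_false_eq_true, abs_zero]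
      have := h1 i
      positivity
  have hlim : ∀ y, ∃ a, Tendsto (fun i => F i y) U (𝓝 a) := by
    intro y
    have hc : IsCompact (Set.Icc (-(2 * ‖y‖)) (2 * ‖y‖)) := isCompact_Icc
    obtain ⟨a, -, ha⟩ := hc.ultrafilter_le_nhds (U.map (fun i => F i y)) (by
      rw [le_principal_iff]
      refine Filter.mem_map.2 (Filter.univ_mem' fun i => ?_)
      have h3 : 1 / ((i.2 : ℝ) + 1) ≤ 1 := by
        rw [div_le_one (by positivity)]
        have : (0 : ℝ) ≤ i.2 := by positivity
        linarith
      have := hFb i y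
      have h4 : (1 + 1 / ((i.2 : ℝ) + 1)) * ‖y‖ ≤ 2 * ‖y‖ := by
        gcongr; linarith
      exact abs_le.1 (this.trans h4))
    exact ⟨a, ha⟩
  choose g hg using hlim
  have hadd : ∀ y z, g (y + z) = g y + g z := by
    intro y z
    refine tendsto_nhds_unique (hg (y + z)) (((hg y).add (hg z)).congr' ?_)
    filter_upwards [hmem y, hmem z] with i hy hz
    have hyz := Submodule.add_mem _ hy hz
    simp only [F, hy, hz, hyz, dif_pos]
    rw [← map_add, ← map_add]; rfl
  have hsmul : ∀ (r : ℝ) y, g (r • y) = r • g y := by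
    intro r y
    refine tendsto_nhds_unique (hg (r • y)) (((hg y).const_smul r).congr' ?_)
    filter_upwards [hmem y] with i hy
    have hyz := Submodule.smul_mem _ r hy
    simp only [F, hy, hyz, dif_pos]
    rw [← map_smul, ← map_smul]; rfl
  have hbd : ∀ y, ‖g y‖ ≤ 1 * ‖y‖ := by
    intro y
    have h5 : Tendsto (fun i : Finset Y × ℕ => (1 + 1 / ((i.2 : ℝ) + 1)) * ‖y‖) U
        (𝓝 ((1 + 0) * ‖y‖)) := (heps.const_add 1).mul_const _
    rw [add_zero] at h5
    exact le_of_tendsto_of_tendsto' (hg y).abs h5 (fun i => hFb i y)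
  let G : Y →L[ℝ] ℝ := LinearMap.mkContinuous
    { toFun := g, map_add' := hadd, map_smul' := hsmul } 1 hbd
  have hG : ∀ y, G y = g y := fun y => rfl
  have hext : ∀ x : X, G x = f x := by
    intro x
    rw [hG]
    refine tendsto_nhds_unique (hg x) (tendsto_const_nhds.congr' ?_)
    filter_upwards [hmem x] with i hi
    simp only [F, hi, dif_pos]
    congr 1
    exact Subtype.ext (hT1 i ⟨x, hi⟩ x.2).symm
  refine ⟨G, le_antisymm (LinearMap.mkContinuous_norm_le _ zero_le_one _) ?_, hext, ?_⟩
  · rw [← hf]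
    refine f.opNorm_le_bound (norm_nonneg _) fun x => ?_
    rw [← hext]
    exact G.le_opNorm x
  · intro x z c η hc hη
    obtain ⟨i, hi1, hi2, hi3, hi4⟩ := ((hmem x).and ((hmem z).and
      (((hg z).eventually (lt_mem_nhds hc)).and (heps.eventually (gt_mem_nhds hη))))).exists
    simp only [F, hi2, dif_pos] at hi3
    refine ⟨T i ⟨z, hi2⟩, hi3, (hT2 i ⟨z, hi2⟩).2.trans ?_, ?_⟩
    · gcongr
    · have h6 := (hT2 i (⟨x, hi1⟩ - ⟨z, hi2⟩)).1
      have h7 : T i ⟨x, hi1⟩ = x := Subtype.ext (hT1 i ⟨x, hi1⟩ x.2)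
      rw [map_sub, h7] at h6
      refine le_trans ?_ h6
      change _ ≤ _ * ‖(x : Y) - z‖
      gcongr

/-- If a Banach space `Y` has the LD2P+ and `X` is a closed subspace of `Y` which is an
almost isometric ideal in `Y`, then `X` has the LD2P+. -/
theorem LD2P_plus_of_aiIdeal {Y : Type*} [NormedAddCommGroup Y] [NormedSpace ℝ Y]
    [CompleteSpace Y]
    (hY : ∀ f : Y →L[ℝ] ℝ, ‖f‖ = 1 → ∀ ε : ℝ, 0 < ε → ∀ δ : ℝ, 0 < δ →
      ∀ y : Y, ‖y‖ ≤ 1 → f y > 1 - ε → ‖y‖ = 1 →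
        ∃ z : Y, ‖z‖ ≤ 1 ∧ f z > 1 - ε ∧ ‖y - z‖ > 2 - δ)
    (X : Subspace ℝ Y) (hXclosed : IsClosed (X : Set Y)) (hX : IsAiIdeal X) :
    ∀ f : X →L[ℝ] ℝ, ‖f‖ = 1 → ∀ ε : ℝ, 0 < ε → ∀ δ : ℝ, 0 < δ →
      ∀ x : X, ‖x‖ ≤ 1 → f x > 1 - ε → ‖x‖ = 1 →
        ∃ y : X, ‖y‖ ≤ 1 ∧ f y > 1 - ε ∧ ‖x - y‖ > 2 - δ := by
  intro f hf ε hε δ hδ x hx1 hfx hx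
  obtain ⟨g, hg1, hgx, hg⟩ := exists_ext_aux X hX f hf
  obtain ⟨z, hz1, hz2, hz3⟩ := hY g hg1 ε hε (δ / 2) (by positivity) x hx1
    (by rw [hgx]; exact hfx) hx
  obtain ⟨c, hc1, hc2⟩ := exists_between hz2
  obtain ⟨η, hη, hη2⟩ := exists_between
    (show 0 < min (c - (1 - ε)) (δ / 6) from lt_min (by linarith) (by positivity))
  have hη3 := hη2.trans_le (min_le_left _ _)
  have hη4 := hη2.trans_le (min_le_right _ _)
  obtain ⟨w, hw1, hw2, hw3⟩ := hg x z c η hc2 hη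
  have hpos : 0 < 1 + η := by linarith
  have hw4 : ‖w‖ ≤ 1 + η := by nlinarith
  have hn : ‖(1 + η)⁻¹ • w‖ ≤ 1 := by
    rw [norm_smul, norm_inv, Real.norm_of_nonneg hpos.le, inv_mul_le_iff₀ hpos]
    linarith
  refine ⟨(1 + η)⁻¹ • w, hn, ?_, ?_⟩
  · rw [map_smul, smul_eq_mul, gt_iff_lt, lt_inv_mul_iff₀ hpos]
    nlinarith
  · have h1 : x - w = (x - (1 + η)⁻¹ • w) - η • ((1 + η)⁻¹ • w) := by
      have : w = (1 + η) • ((1 + η)⁻¹ • w) := (smul_inv_smul₀ hpos.ne' w).symm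
      nth_rewrite 1 [this]
      rw [add_smul, one_smul]; abel
    have h2 : ‖x - w‖ ≤ ‖x - (1 + η)⁻¹ • w‖ + η := by
      rw [h1]
      refine (norm_sub_le _ _).trans ?_
      gcongr
      rw [norm_smul, Real.norm_of_nonneg hη.le]
      nlinarith
    have h3 : ‖(x : Y) - z‖ ≤ 2 := (norm_sub_le _ _).trans (by
      have : ‖(x : Y)‖ = 1 := hx
      linarith)
    nlinarith
end
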